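/- Fifth new modulus-8 identity (profile (4,0,1)): the quadruple sum over n_1,n_2,n_3,n_4 ≥ 0 of q^(n_1^2+n_2^2+n_3^2+n_4^2+n_1+n_3-n_1n_2+n_2n_4)·(1 + q^{n_1+n_2+n_4+1})/(q;q)_{n_1} · [n_1 choose n_2]_q [n_1 choose n_4]_q [n_2 choose n_3]_q equals 1/((q,q^2,q^3,q^4,q^4,q^5,q^6,q^7; q^8)_∞). -/

import Mathlib

/-!
The multisum is identified through the Corteel–Welsh functional equations for cylindric partitions
of rank 3 and level 5, in a finite form.

Introduce a variable `z` marking `n₁`. The resulting power series `G_c(z)`, one for each of the seven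
profiles `c`, are built from three triple sums, and contiguity relations for these show that
`H_c(z) = G_c(z) / (z;q)_∞` satisfies `(1 - z) H_c(z) = ∑ ± H_{c'}(z q^j)` (`aSeq_succ`). The only
computational content is three linear relations, `relation_410`, `relation_311` and `relation_221`,
each an explicit combination of contiguity relations.

On the coefficients of `z ^ n` the system becomes a recurrence in `n`. The same recurrence holds for
the finite theta sums
`∑ ± q^(8 Q + a x + b (x + y)) / ((q;q)_{n + x} (q;q)_{n + y} (q;q)_{n - x - y})`, where the weight
`(a, b)` encodes the profile (`dSeq_succ`); there it follows from the recursion of the three factors,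
the rotation `dAlt_rotate` and the reflection `dAlt_wall`. As all coefficients of the recurrence are
divisible by `q`, its solution is unique by Nakayama's lemma, so the two sides agree for every `n`
(`aSeq_eq_dSeq`).

For `n → ∞` and profile `(4,0,1)` this gives, with `S = G_{(4,0,1)}(1)` the multisum,
`S / (q;q)_∞ = Θ / (q;q)_∞³`, where `Θ` is the theta series of weight `(1, 2)`. Its exponent separates
into a pentagonal number and four times a triangular number, whence `Θ = (q;q)_∞ ψ(q⁴)`
(`thetaTerm_hasSum`), with `ψ(q) = ∑_{N ≥ 0} q^(N(N+1)/2)`. Thus `S = ψ(q⁴) / (q;q)_∞`, and Gauss's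
formula `ψ(q⁴) = (q⁸;q⁸)_∞ / (q⁴;q⁸)_∞`, obtained from Shanks's finite identity (`shanks`), turns this
into the infinite product.
-/

open scoped Finset

noncomputable instance : TopologicalSpace (PowerSeries ℚ) :=
  Pi.topologicalSpace (ι := Unit →₀ ℕ) (Y := fun _ => ℚ)

/-- The formal variable `q`. -/
noncomputable def q : PowerSeries ℚ := PowerSeries.X

/-- The q-Pochhammer symbol `(q;q)_n = ∏_{k=0}^{n-1} (1 - q·q^k)`. -/
noncomputable def qPoch (n : ℕ) : PowerSeries ℚ :=
  ∏ k ∈ Finset.range n, (1 - q ^ (k + 1))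

/-- The Gaussian binomial coefficient `[m choose k]_q`, zero unless `k ≤ m`. -/
noncomputable def qBinom (m k : ℕ) : PowerSeries ℚ :=
  if k ≤ m then qPoch m * (qPoch k * qPoch (m - k))⁻¹ else 0

/-! ### Triple sums and their contiguity relations -/

/-- The finite Pochhammer symbol `(w;w)_n` in a field. -/
noncomputable def fPoch {K : Type*} [Field K] (w : K) (n : ℕ) : K :=
  ∏ k ∈ Finset.range n, (1 - w ^ (k + 1))

/-- The Gaussian binomial coefficient `[m choose k]_w` in a field, zero unless `k ≤ m`. -/
noncomputable def fBinom {K : Type*} [Field K] (w : K) (m k : ℕ) : K :=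
  if k ≤ m then fPoch w m / (fPoch w k * fPoch w (m - k)) else 0

/-- The Rogers–Szegő type sum `s_n(b) = ∑_k w^(k² + b k) [n choose k]_w`. -/
noncomputable def innerSum {K : Type*} [Field K] (w : K) (n : ℕ) (b : ℤ) : K :=
  ∑ k ∈ Finset.range (n + 1), w ^ ((k : ℤ) ^ 2 + b * k) * fBinom w n k

/-- The triple sum `∑_n w^(n² + a n) [p choose n]_w s_n(b) s_r(c + n)`, where `s` is `innerSum`.
The linear coefficients `a`, `b`, `c` are integers, so the exponents may be negative. -/
noncomputable def tripleSum {K : Type*} [Field K] (w : K) (p r : ℕ) (a b c : ℤ) : K :=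
  ∑ n ∈ Finset.range (p + 1),
    w ^ ((n : ℤ) ^ 2 + a * n) * fBinom w p n * innerSum w n b * innerSum w r (c + n)

section algebra
variable {K : Type*} [Field K] {w : K}

lemma fPoch_succ (n : ℕ) : fPoch w (n + 1) = fPoch w n * (1 - w ^ (n + 1)) := by
  rw [fPoch, Finset.prod_range_succ, ← fPoch]

lemma fPoch_ne_zero (hw : ∀ k : ℕ, 1 - w ^ (k + 1) ≠ 0) (n : ℕ) : fPoch w n ≠ 0 :=
  Finset.prod_ne_zero_iff.mpr fun k _ => hw k

/-- The ratio of consecutive binomials in the lower index, with the denominators multiplied by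
`w ^ k` so that no negative exponent appears. -/
lemma fBinom_raise_bot (hw : ∀ k : ℕ, 1 - w ^ (k + 1) ≠ 0) {n k : ℕ} (hk : k ≤ n) :
    (w ^ k - w ^ n) * fBinom w n k = w ^ k * (1 - w ^ (k + 1)) * fBinom w n (k + 1) := by
  rcases hk.eq_or_lt with rfl | hk
  · simp [fBinom]
  obtain ⟨d, rfl⟩ : ∃ d, n = k + 1 + d := ⟨n - (k + 1), by omega⟩
  have h1 := fPoch_ne_zero hw k
  have h2 := fPoch_ne_zero hw d
  have h3 := hw k
  have h4 := hw d
  rw [fBinom, fBinom, if_pos (by omega), if_pos (by omega),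
    show k + 1 + d - k = d + 1 by omega, show k + 1 + d - (k + 1) = d by omega,
    fPoch_succ, fPoch_succ]
  field_simp
  ring

/-- The ratio of consecutive binomials in the upper index, cleared in the same way. -/
lemma fBinom_lower_top (hw : ∀ k : ℕ, 1 - w ^ (k + 1) ≠ 0) {n k : ℕ} (hk : k ≤ n + 1) :
    (w ^ k - w ^ (n + 1)) * fBinom w (n + 1) k = w ^ k * (1 - w ^ (n + 1)) * fBinom w n k := by
  rcases hk.eq_or_lt with rfl | hk
  · simp [fBinom]
  obtain ⟨d, rfl⟩ : ∃ d, n = k + d := ⟨n - k, by omega⟩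
  have h1 := fPoch_ne_zero hw k
  have h2 := fPoch_ne_zero hw d
  have h4 := hw d
  rw [fBinom, fBinom, if_pos (by omega), if_pos (by omega),
    show k + d + 1 - k = d + 1 by omega, show k + d - k = d by omega,
    fPoch_succ, fPoch_succ d]
  field_simp
  ring

/-- A sum of differences `A k - B k` telescopes when `B k = A (k + 1)`. The relations `innerSum_contig` and
`tripleSum_contig_a` are of this form. -/
lemma sum_range_sub_shift {M : Type*} [AddCommGroup M] (A B : ℕ → M) (n : ℕ) (h0 : A 0 = 0)
    (hn : B n = 0) (h : ∀ k < n, B k = A (k + 1)) :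
    ∑ k ∈ Finset.range (n + 1), (A k - B k) = 0 := by
  rw [Finset.sum_sub_distrib, Finset.sum_range_succ', Finset.sum_range_succ, h0, hn,
    Finset.sum_congr rfl fun k hk => h k (Finset.mem_range.mp hk)]
  simp

/-- Contiguity of `innerSum` in its linear coefficient, at a fixed level `n`. -/
lemma innerSum_contig (hw0 : w ≠ 0) (hw : ∀ k : ℕ, 1 - w ^ (k + 1) ≠ 0) (n : ℕ) (b : ℤ) :
    innerSum w n b - innerSum w n (b + 1)
      + w ^ (1 + b) * (w ^ n * innerSum w n (b + 1) - innerSum w n (b + 2)) = 0 := by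
  rw [← sum_range_sub_shift
    (fun k : ℕ => w ^ ((k : ℤ) ^ 2 + b * k) * (1 - w ^ k) * fBinom w n k)
    (fun k : ℕ => w ^ (1 + b + (k : ℤ) ^ 2 + b * k + k) * ((w ^ k - w ^ n) * fBinom w n k)) n
    (by simp) (by simp) ?_]
  · simp only [innerSum, Finset.mul_sum, ← Finset.sum_sub_distrib, ← Finset.sum_add_distrib]
    refine Finset.sum_congr rfl fun k _ => ?_
    simp only [zpow_add₀ hw0, add_mul, zpow_natCast, one_mul, zpow_one, two_mul]
    ring
  · intro k hk
    rw [fBinom_raise_bot hw hk.le]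
    push_cast
    simp only [zpow_add₀ hw0, add_mul, mul_add, zpow_natCast, one_mul, zpow_one, mul_one,
      pow_two]
    ring

/-- Expresses level `n` of `innerSum` through level `n + 1`. -/
lemma innerSum_lower (hw0 : w ≠ 0) (hw : ∀ k : ℕ, 1 - w ^ (k + 1) ≠ 0) (n : ℕ) (b : ℤ) :
    (1 - w ^ (n + 1)) * innerSum w n b
      = innerSum w (n + 1) b - w ^ (n + 1) * innerSum w (n + 1) (b - 1) := by
  have h0 : innerSum w n b
      = ∑ k ∈ Finset.range (n + 1 + 1), w ^ ((k : ℤ) ^ 2 + b * k) * fBinom w n k := by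
    rw [Finset.sum_range_succ _ (n + 1), innerSum, fBinom, if_neg (by omega)]
    simp
  rw [h0, innerSum, innerSum, Finset.mul_sum, Finset.mul_sum, ← Finset.sum_sub_distrib]
  refine Finset.sum_congr rfl fun k hk => ?_
  have hk := fBinom_lower_top hw (Nat.lt_succ_iff.mp (Finset.mem_range.mp hk))
  have hk0 : w ^ k ≠ 0 := pow_ne_zero _ hw0
  simp only [zpow_add₀ hw0, sub_mul, zpow_natCast, one_mul, zpow_sub₀ hw0]
  rw [← mul_right_inj' hk0]
  field_simp
  linear_combination -hk

/-- Contiguity in the linear coefficient `b` of the second factor. -/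
lemma tripleSum_contig_b (hw0 : w ≠ 0) (hw : ∀ k : ℕ, 1 - w ^ (k + 1) ≠ 0) (p r : ℕ)
    (a b c : ℤ) :
    tripleSum w p r a b c - tripleSum w p r a (b + 1) c
      + w ^ (1 + b) * (tripleSum w p r (a + 1) (b + 1) c - tripleSum w p r a (b + 2) c) = 0 := by
  simp only [tripleSum, Finset.mul_sum, ← Finset.sum_sub_distrib, ← Finset.sum_add_distrib]
  refine Finset.sum_eq_zero fun n _ => ?_
  have h := innerSum_contig hw0 hw n b
  simp only [add_mul, one_mul, ← add_assoc, zpow_add₀ hw0 _ (n : ℤ), zpow_natCast]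
  linear_combination (w ^ ((n : ℤ) ^ 2 + a * n) * fBinom w p n * innerSum w r (c + n)) * h

/-- Contiguity in the linear coefficient `c` of the third factor. -/
lemma tripleSum_contig_c (hw0 : w ≠ 0) (hw : ∀ k : ℕ, 1 - w ^ (k + 1) ≠ 0) (p r : ℕ)
    (a b c : ℤ) :
    tripleSum w p r a b c - tripleSum w p r a b (c + 1)
      + w ^ (1 + c) * (w ^ r * tripleSum w p r (a + 1) b (c + 1)
        - tripleSum w p r (a + 1) b (c + 2)) = 0 := by
  simp only [tripleSum, Finset.mul_sum, ← Finset.sum_sub_distrib, ← Finset.sum_add_distrib]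
  refine Finset.sum_eq_zero fun n _ => ?_
  have h := innerSum_contig hw0 hw r (c + n)
  rw [show c + n + 1 = c + 1 + n by ring, show c + n + 2 = c + 2 + n by ring,
    show (1 : ℤ) + (c + n) = 1 + c + n by ring] at h
  simp only [add_mul, one_mul, ← add_assoc, zpow_add₀ hw0 _ (n : ℤ), zpow_natCast] at h ⊢
  linear_combination (w ^ ((n : ℤ) ^ 2 + a * n) * fBinom w p n * innerSum w n b) * h

/-- Contiguity in the linear coefficient `a` of the outer sum. Shifting the outer index raises the level
of the second factor by one, and `innerSum_lower` undoes this. -/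
lemma tripleSum_contig_a (hw0 : w ≠ 0) (hw : ∀ k : ℕ, 1 - w ^ (k + 1) ≠ 0) (p r : ℕ)
    (a b c : ℤ) :
    tripleSum w p r a (b + 1) c - tripleSum w p r (a + 1) b c
      + w ^ (1 + a) * (w ^ p * tripleSum w p r (a + 1) (b + 1) (c + 1)
        - tripleSum w p r (a + 2) (b + 1) (c + 1)) = 0 := by
  rw [← sum_range_sub_shift
    (fun n : ℕ => w ^ ((n : ℤ) ^ 2 + a * n) * fBinom w p n
      * (innerSum w n (b + 1) - w ^ n * innerSum w n b) * innerSum w r (c + n))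
    (fun n : ℕ => w ^ (1 + a + (n : ℤ) ^ 2 + a * n + n) * ((w ^ n - w ^ p) * fBinom w p n)
      * innerSum w n (b + 1) * innerSum w r (c + 1 + n)) p (by simp [innerSum, fBinom, fPoch])
      (by simp) ?_]
  · simp only [tripleSum, Finset.mul_sum, ← Finset.sum_sub_distrib, ← Finset.sum_add_distrib]
    refine Finset.sum_congr rfl fun n _ => ?_
    simp only [zpow_add₀ hw0, add_mul, zpow_natCast, one_mul, zpow_one, two_mul]
    ring
  · intro n hn
    rw [fBinom_raise_bot hw hn.le]
    have h := innerSum_lower hw0 hw n (b + 1)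
    rw [add_sub_cancel_right] at h
    rw [show c + 1 + (n : ℤ) = c + ((n + 1 : ℕ) : ℤ) by push_cast; ring, ← h]
    push_cast
    simp only [zpow_add₀ hw0, add_mul, mul_add, zpow_natCast, one_mul, zpow_one, mul_one,
      pow_two]
    ring

/-- Expresses level `p` of the outer binomial through level `p + 1`. -/
lemma tripleSum_lower_left (hw0 : w ≠ 0) (hw : ∀ k : ℕ, 1 - w ^ (k + 1) ≠ 0) (p r : ℕ)
    (a b c : ℤ) :
    (1 - w ^ (p + 1)) * tripleSum w p r a b c
      = tripleSum w (p + 1) r a b c - w ^ (p + 1) * tripleSum w (p + 1) r (a - 1) b c := by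
  have h0 : tripleSum w p r a b c = ∑ n ∈ Finset.range (p + 1 + 1),
      w ^ ((n : ℤ) ^ 2 + a * n) * fBinom w p n * innerSum w n b * innerSum w r (c + n) := by
    rw [Finset.sum_range_succ _ (p + 1), tripleSum]
    simp [fBinom]
  rw [h0, tripleSum, tripleSum, Finset.mul_sum, Finset.mul_sum, ← Finset.sum_sub_distrib]
  refine Finset.sum_congr rfl fun k hk => ?_
  have hk := fBinom_lower_top hw (Nat.lt_succ_iff.mp (Finset.mem_range.mp hk))
  have hk0 : w ^ k ≠ 0 := pow_ne_zero _ hw0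
  simp only [zpow_add₀ hw0, sub_mul, zpow_natCast, one_mul, zpow_sub₀ hw0]
  rw [← mul_right_inj' hk0]
  field_simp
  linear_combination (- innerSum w k b * innerSum w r (c + k)) * hk

/-- Expresses level `r` of the third factor through level `r + 1`. -/
lemma tripleSum_lower_right (hw0 : w ≠ 0) (hw : ∀ k : ℕ, 1 - w ^ (k + 1) ≠ 0) (p r : ℕ)
    (a b c : ℤ) :
    (1 - w ^ (r + 1)) * tripleSum w p r a b c
      = tripleSum w p (r + 1) a b c - w ^ (r + 1) * tripleSum w p (r + 1) a b (c - 1) := by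
  simp only [tripleSum, Finset.mul_sum, ← Finset.sum_sub_distrib]
  refine Finset.sum_congr rfl fun n _ => ?_
  have h := innerSum_lower hw0 hw r (c + n)
  rw [show c + n - 1 = c - 1 + n by ring] at h
  linear_combination (w ^ ((n : ℤ) ^ 2 + a * n) * fBinom w p n * innerSum w n b) * h

end algebra

/-! ### Linear relations between consecutive levels -/

/-- The contiguity relations satisfied by `t i b c`, the triple sum at level `m` with linear
coefficients `i - m`, `b`, `c`, where `Q = w ^ m`. All shifted indices, and the exponent `k`, are
separate variables tied by equations, so that instances at numerals need no normalization. -/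
structure Contiguous {K : Type*} [Field K] (w Q : K) (t : ℤ → ℤ → ℤ → K) : Prop where
  contig_b : ∀ i i₁ b b₁ b₂ c : ℤ, ∀ k : ℕ, i₁ = i + 1 → b₁ = b + 1 → b₂ = b + 2 → (k : ℤ) = 1 + b →
    t i b c - t i b₁ c + w ^ k * (t i₁ b₁ c - t i b₂ c) = 0
  contig_a : ∀ i i₁ i₂ b b₁ c c₁ : ℤ, ∀ k : ℕ, i₁ = i + 1 → i₂ = i + 2 → b₁ = b + 1 → c₁ = c + 1 →
    (k : ℤ) = 1 + i → Q * (t i b₁ c - t i₁ b c) + w ^ k * (Q * t i₁ b₁ c₁ - t i₂ b₁ c₁) = 0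
  contig_c : ∀ i i₁ b c c₁ c₂ : ℤ, ∀ k : ℕ, i₁ = i + 1 → c₁ = c + 1 → c₂ = c + 2 → (k : ℤ) = c + 2 →
    w * (t i b c - t i b c₁) + w ^ k * (Q * t i₁ b c₁ - t i₁ b c₂) = 0

section certificates
variable {K : Type*} [Field K]

/-- The linear relation between levels `m` and `m - 1` that yields the functional equation for profile
`(4,1,0)`. Here `w * y` stands for `w ^ m`, and `T₁` is the triple sum one level lower, with its
normalizing factor. The left-hand side, times `1 - w * y`, is the displayed combination of
contiguity relations (`hB`, `hF`, `hC`) and level-lowering relations (`h₁`); the coefficients solve a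
linear system over `ℚ(w, y)`. -/
lemma relation_410 {w y : K} (hw0 : w ≠ 0) (hy0 : y ≠ 0) (hQ : 1 - w * y ≠ 0)
    {t T₁ : ℤ → ℤ → ℤ → K} (ht : Contiguous w (w * y) t)
    (h₁ : ∀ i i' b c c' : ℤ, i' = i - 1 → c' = c - 1 → (1 - w * y) * T₁ i b c
      = t i b c - w * y * t i' b c - w * y * (t i b c' - w * y * t i' b c')) :
    (1) * t 1 1 1 + (-w * y - w ^ 3 * y ^ 3) * T₁ 2 1 1 + (-1 - w ^ 2 * y ^ 2) * T₁ 1 1 0 + (-w ^ 2 * y ^ 2) * t 0 1 0 + (-w * y) * T₁ 1 0 0 = 0 := by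
  obtain ⟨hB, hF, hC⟩ := ht
  refine (mul_eq_zero.mp ?_).resolve_left (mul_ne_zero
    (mul_ne_zero (pow_ne_zero 0 hw0) (pow_ne_zero 0 hy0)) (hQ))
  linear_combination
      (1 - w * y + w ^ 2 * y ^ 2) * hF (-1) 0 1 0 1 (-1) 0 0 rfl rfl rfl rfl rfl
      + (-y + w * y ^ 2 - w ^ 2 * y ^ 3) * hC (-1) 0 1 (-1) 0 1 1 rfl rfl rfl rfl
      + (-w * y ^ 2) * hC (-1) 0 0 (-1) 0 1 1 rfl rfl rfl rfl
      + (w ^ 2 * y ^ 2) * hB 0 1 (-1) 0 1 (-1) 0 rfl rfl rfl rfl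
      + (-w ^ 3 * y ^ 4) * hC 0 1 1 (-1) 0 1 1 rfl rfl rfl rfl
      + (-w * y) * hF (-1) 0 1 (-1) 0 0 1 0 rfl rfl rfl rfl rfl
      + (w * y) * hF (-1) 0 1 (-1) 0 (-1) 0 0 rfl rfl rfl rfl rfl
      + (-1 + w * y - w ^ 2 * y ^ 2) * hF (-1) 0 1 0 1 0 1 0 rfl rfl rfl rfl rfl
      + (y) * hC 0 1 0 (-1) 0 1 1 rfl rfl rfl rfl
      + (y + w ^ 2 * y ^ 3) * hC 1 2 1 (-1) 0 1 1 rfl rfl rfl rfl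
      + (-w ^ 2 * y ^ 2) * hB 0 1 (-1) 0 1 0 0 rfl rfl rfl rfl
      + (-w * y - w ^ 3 * y ^ 3) * h₁ 2 1 1 1 0 rfl rfl
      + (-1 - w ^ 2 * y ^ 2) * h₁ 1 0 1 0 (-1) rfl rfl
      + (-w * y) * h₁ 1 0 0 0 (-1) rfl rfl

/-- The relation between levels `m`, `m - 1` and `m - 2` that yields the functional equation for
profile `(3,1,1)`; `T₂` is the triple sum two levels lower. Here the left-hand side is multiplied by
`w² (1 - w y) (1 - y)` before it is written as such a combination. -/
lemma relation_311 {w y : K} (hw0 : w ≠ 0) (hy0 : y ≠ 0) (hQ : 1 - w * y ≠ 0)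
    {t T₁ T₂ : ℤ → ℤ → ℤ → K} (ht : Contiguous w (w * y) t)
    (h₁ : ∀ i i' b c c' : ℤ, i' = i - 1 → c' = c - 1 → (1 - w * y) * T₁ i b c
      = t i b c - w * y * t i' b c - w * y * (t i b c' - w * y * t i' b c'))
    (hy1 : 1 - y ≠ 0)
    (h₂ : ∀ i i' b c c' : ℤ, i' = i - 1 → c' = c - 1 → (1 - y) * T₂ i b c
      = T₁ i b c - y * T₁ i' b c - y * (T₁ i b c' - y * T₁ i' b c')) :
    (y + w ^ 3 * y ^ 4) * t 0 1 0 + (-w * y ^ 2) * t 0 0 0 + (w ^ 4 * y ^ 5) * T₁ 2 1 1 + (-y ^ 2 + w ^ 3 * y ^ 4) * T₁ 1 1 0 + (-w * y ^ 2) * t 1 1 1 + (-y + w ^ 2 * y ^ 3) * T₁ 1 0 0 + (-y - y ^ 3) * T₂ 3 1 1 + (-1 - y ^ 2) * T₂ 2 1 0 + (-y) * T₂ 2 0 0 = 0 := by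
  obtain ⟨hB, hF, hC⟩ := ht
  refine (mul_eq_zero.mp ?_).resolve_left (mul_ne_zero
    (mul_ne_zero (pow_ne_zero 2 hw0) (pow_ne_zero 0 hy0)) (mul_ne_zero hQ hy1))
  linear_combination
      (w ^ 2 * y ^ 5 + w ^ 3 * y ^ 3 + w ^ 3 * y ^ 5) * hC 0 1 2 (-2) (-1) 0 0 rfl rfl rfl rfl
      + (w * y - w * y ^ 4 - 2 * w ^ 2 * y ^ 2 - 2 * w ^ 2 * y ^ 4 - w ^ 2 * y ^ 5 - w ^ 3 * y ^ 2 - w ^ 3 * y ^ 5 + w ^ 4 * y ^ 4 - w ^ 4 * y ^ 5 - w ^ 5 * y ^ 5 + w ^ 5 * y ^ 6) * hB 0 1 0 1 2 (-1) 1 rfl rfl rfl rfl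
      + (-w ^ 2 * y ^ 2 - w ^ 2 * y ^ 4) * hC 2 3 1 (-2) (-1) 0 0 rfl rfl rfl rfl
      + (w ^ 2 * y ^ 2 - w ^ 2 * y ^ 3 - w ^ 3 * y ^ 3) * hF 0 1 2 0 1 (-2) (-1) 1 rfl rfl rfl rfl rfl
      + (-w * y + w * y ^ 4 + w ^ 2 * y ^ 2 + 2 * w ^ 2 * y ^ 4 + w ^ 3 * y ^ 2 - w ^ 3 * y ^ 3 + w ^ 3 * y ^ 4 - w ^ 5 * y ^ 4 + 2 * w ^ 5 * y ^ 5 - w ^ 5 * y ^ 6 + w ^ 6 * y ^ 5 - w ^ 6 * y ^ 6) * hB 0 1 0 1 2 0 1 rfl rfl rfl rfl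
      + (w ^ 3 * y ^ 2 + w ^ 5 * y ^ 3 - w ^ 5 * y ^ 4) * hF (-1) 0 1 1 2 0 1 0 rfl rfl rfl rfl rfl
      + (w ^ 3 * y ^ 3 + w ^ 5 * y ^ 4 - w ^ 5 * y ^ 5) * hC (-1) 0 2 (-1) 0 1 1 rfl rfl rfl rfl
      + (w ^ 2 * y + w ^ 2 * y ^ 6 - w ^ 3 * y ^ 3 + w ^ 3 * y ^ 4 + w ^ 3 * y ^ 6) * hB 1 2 0 1 2 (-1) 1 rfl rfl rfl rfl
      + (-w ^ 3 * y ^ 3) * hB 1 2 (-1) 0 1 (-2) 0 rfl rfl rfl rfl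
      + (w * y - w * y ^ 4 - 2 * w ^ 2 * y ^ 2 - 2 * w ^ 2 * y ^ 4 - w ^ 3 * y ^ 2 + w ^ 4 * y ^ 4 - w ^ 5 * y ^ 5 + w ^ 5 * y ^ 6) * hC 0 1 2 (-1) 0 1 1 rfl rfl rfl rfl
      + (w ^ 2 * y ^ 2) * hB 1 2 (-1) 0 1 (-1) 0 rfl rfl rfl rfl
      + (w - w * y + w * y ^ 2 - w ^ 2 * y + 2 * w ^ 2 * y ^ 2 + w ^ 2 * y ^ 3 - w ^ 3 * y ^ 5 + w ^ 4 * y ^ 3 - w ^ 4 * y ^ 4) * hF 0 1 2 0 1 (-1) 0 1 rfl rfl rfl rfl rfl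
      + (w ^ 2 * y ^ 2 + w ^ 2 * y ^ 4 + w ^ 5 * y ^ 5 - w ^ 5 * y ^ 6) * hC (-1) 0 1 (-1) 0 1 1 rfl rfl rfl rfl
      + (-w * y ^ 5 - w ^ 2 * y ^ 5 - w ^ 3 * y ^ 5) * hC 0 1 0 (-2) (-1) 0 0 rfl rfl rfl rfl
      + (-w * y + w * y ^ 4 + w ^ 2 * y ^ 2 + 2 * w ^ 2 * y ^ 4 - w ^ 4 * y ^ 3 + w ^ 4 * y ^ 4 + w ^ 5 * y ^ 5 - w ^ 5 * y ^ 6) * hB 1 2 0 1 2 1 1 rfl rfl rfl rfl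
      + (-w ^ 3 * y ^ 2 - w ^ 5 * y ^ 3 + w ^ 5 * y ^ 4) * hF (-1) 0 1 1 2 (-1) 0 0 rfl rfl rfl rfl rfl
      + (-w ^ 2 * y - w ^ 2 * y ^ 3 - w ^ 5 * y ^ 4 + w ^ 5 * y ^ 5) * hF (-1) 0 1 0 1 (-1) 0 0 rfl rfl rfl rfl rfl
      + (w * y + w * y ^ 3) * hC 2 3 1 (-1) 0 1 1 rfl rfl rfl rfl
      + (w ^ 2 * y ^ 5 + w ^ 3 * y ^ 3 + w ^ 3 * y ^ 5) * hB 0 1 0 1 2 (-2) 1 rfl rfl rfl rfl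
      + (w ^ 2 * y + w ^ 2 * y ^ 3 + w ^ 5 * y ^ 4 - w ^ 5 * y ^ 5) * hF (-1) 0 1 0 1 0 1 0 rfl rfl rfl rfl rfl
      + (-w ^ 2 * y + w ^ 3 * y ^ 3) * hF 0 1 2 1 2 0 1 1 rfl rfl rfl rfl rfl
      + (w ^ 2 * y - w ^ 3 * y ^ 3) * hC 1 2 2 (-1) 0 1 1 rfl rfl rfl rfl
      + (-w * y ^ 5 - w ^ 2 * y + 2 * w ^ 2 * y ^ 2 - w ^ 2 * y ^ 3 - 2 * w ^ 2 * y ^ 5 - w ^ 3 * y ^ 3 - 2 * w ^ 3 * y ^ 5 + w ^ 4 * y ^ 3 - w ^ 4 * y ^ 4 - w ^ 6 * y ^ 6 + w ^ 6 * y ^ 7) * hB 1 2 0 1 2 0 1 rfl rfl rfl rfl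
      + (w * y) * hF 0 1 2 (-1) 0 (-1) 0 1 rfl rfl rfl rfl rfl
      + (-y + y ^ 4 + w * y ^ 2 + 2 * w * y ^ 4 - w ^ 3 * y ^ 3 + w ^ 3 * y ^ 4 + w ^ 4 * y ^ 5 - w ^ 4 * y ^ 6) * hC 0 1 0 (-1) 0 1 1 rfl rfl rfl rfl
      + (w * y ^ 5 + w ^ 2 * y ^ 4 + w ^ 2 * y ^ 5 - w ^ 3 * y ^ 6) * hC 0 1 1 (-2) (-1) 0 0 rfl rfl rfl rfl
      + (-w ^ 2 * y ^ 2) * hF 0 1 2 (-1) 0 (-2) (-1) 1 rfl rfl rfl rfl rfl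
      + (w ^ 3 * y ^ 2 - w ^ 4 * y ^ 4) * hF 0 1 2 1 2 (-1) 0 1 rfl rfl rfl rfl rfl
      + (-w * y - w * y ^ 2 + w ^ 2 * y ^ 4 - w ^ 4 * y ^ 3 + w ^ 4 * y ^ 4) * hF 0 1 2 0 1 0 1 1 rfl rfl rfl rfl rfl
      + (y - y ^ 4 - w * y - w * y ^ 2 - w * y ^ 3 - 2 * w * y ^ 4 - w ^ 2 * y ^ 3 + w ^ 2 * y ^ 5 + w ^ 3 * y ^ 5 - w ^ 4 * y ^ 4 + w ^ 4 * y ^ 6 - w ^ 5 * y ^ 4 + w ^ 5 * y ^ 5 + w ^ 6 * y ^ 6 - w ^ 6 * y ^ 7) * hC 0 1 1 (-1) 0 1 1 rfl rfl rfl rfl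
      + (w ^ 6 * y ^ 5 - w ^ 6 * y ^ 6) * h₁ 2 1 1 1 0 rfl rfl
      + (-w ^ 2 * y ^ 2 + w ^ 2 * y ^ 3 + w ^ 5 * y ^ 4 - w ^ 5 * y ^ 5) * h₁ 1 0 1 0 (-1) rfl rfl
      + (-w ^ 2 * y + w ^ 2 * y ^ 2 + w ^ 4 * y ^ 3 - w ^ 4 * y ^ 4) * h₁ 1 0 0 0 (-1) rfl rfl
      + (-w ^ 2 * y - w ^ 2 * y ^ 3 + w ^ 3 * y ^ 2 + w ^ 3 * y ^ 4) * h₂ 3 2 1 1 0 rfl rfl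
      + (-w ^ 2 * y - w ^ 2 * y ^ 3) * h₁ 3 2 1 1 0 rfl rfl
      + (w ^ 2 * y ^ 2 + w ^ 2 * y ^ 4) * h₁ 2 1 1 1 0 rfl rfl
      + (w ^ 2 * y ^ 2 + w ^ 2 * y ^ 4) * h₁ 3 2 1 0 (-1) rfl rfl
      + (-w ^ 2 * y ^ 3 - w ^ 2 * y ^ 5) * h₁ 2 1 1 0 (-1) rfl rfl
      + (-w ^ 2 - w ^ 2 * y ^ 2 + w ^ 3 * y + w ^ 3 * y ^ 3) * h₂ 2 1 1 0 (-1) rfl rfl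
      + (-w ^ 2 - w ^ 2 * y ^ 2) * h₁ 2 1 1 0 (-1) rfl rfl
      + (w ^ 2 * y + w ^ 2 * y ^ 3) * h₁ 1 0 1 0 (-1) rfl rfl
      + (w ^ 2 * y + w ^ 2 * y ^ 3) * h₁ 2 1 1 (-1) (-2) rfl rfl
      + (-w ^ 2 * y ^ 2 - w ^ 2 * y ^ 4) * h₁ 1 0 1 (-1) (-2) rfl rfl
      + (-w ^ 2 * y + w ^ 3 * y ^ 2) * h₂ 2 1 0 0 (-1) rfl rfl
      + (-w ^ 2 * y) * h₁ 2 1 0 0 (-1) rfl rfl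
      + (w ^ 2 * y ^ 2) * h₁ 1 0 0 0 (-1) rfl rfl
      + (w ^ 2 * y ^ 2) * h₁ 2 1 0 (-1) (-2) rfl rfl
      + (-w ^ 2 * y ^ 3) * h₁ 1 0 0 (-1) (-2) rfl rfl

/-- The analogue of `relation_311` for profile `(2,2,1)`. -/
lemma relation_221 {w y : K} (hw0 : w ≠ 0) (hy0 : y ≠ 0) (hQ : 1 - w * y ≠ 0)
    {t T₁ T₂ : ℤ → ℤ → ℤ → K} (ht : Contiguous w (w * y) t)
    (h₁ : ∀ i i' b c c' : ℤ, i' = i - 1 → c' = c - 1 → (1 - w * y) * T₁ i b c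
      = t i b c - w * y * t i' b c - w * y * (t i b c' - w * y * t i' b c'))
    (hy1 : 1 - y ≠ 0)
    (h₂ : ∀ i i' b c c' : ℤ, i' = i - 1 → c' = c - 1 → (1 - y) * T₂ i b c
      = T₁ i b c - y * T₁ i' b c - y * (T₁ i b c' - y * T₁ i' b c')) :
    (y - w * y ^ 2 + w ^ 2 * y ^ 3) * t 0 0 0 + (-w * y ^ 2) * t 0 1 0 + (-y) * T₁ 1 0 0 + (-y ^ 2) * T₂ 3 1 1 + (-y) * T₂ 2 1 0 + (-y) * T₁ 1 1 0 + (-1) * T₂ 2 0 0 = 0 := by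
  obtain ⟨hB, hF, hC⟩ := ht
  refine (mul_eq_zero.mp ?_).resolve_left (mul_ne_zero
    (mul_ne_zero (pow_ne_zero 2 hw0) (pow_ne_zero 0 hy0)) (mul_ne_zero hQ hy1))
  linear_combination
      (-w ^ 2 * y ^ 2 + w ^ 2 * y ^ 4 + w ^ 3 * y ^ 4) * hC 0 1 2 (-2) (-1) 0 0 rfl rfl rfl rfl
      + (2 * w * y - w * y ^ 3 - 2 * w ^ 2 * y ^ 3 - w ^ 2 * y ^ 4 - w ^ 3 * y ^ 2 + w ^ 3 * y ^ 3 - w ^ 3 * y ^ 4 + w ^ 4 * y ^ 3 - w ^ 4 * y ^ 4) * hB 0 1 0 1 2 (-1) 1 rfl rfl rfl rfl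
      + (-w ^ 2 * y ^ 3) * hC 2 3 1 (-2) (-1) 0 0 rfl rfl rfl rfl
      + (w ^ 2 * y - w ^ 2 * y ^ 2 - w ^ 3 * y ^ 2) * hF 0 1 2 0 1 (-2) (-1) 1 rfl rfl rfl rfl rfl
      + (-2 * w * y + w * y ^ 3 + 2 * w ^ 2 * y ^ 3 + w ^ 3 * y ^ 3 + w ^ 4 * y ^ 3 - w ^ 4 * y ^ 4 - w ^ 5 * y ^ 4 + w ^ 5 * y ^ 5) * hB 0 1 0 1 2 0 1 rfl rfl rfl rfl
      + (w ^ 3 * y - w ^ 4 * y ^ 2 + w ^ 4 * y ^ 3) * hF (-1) 0 1 1 2 0 1 0 rfl rfl rfl rfl rfl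
      + (w ^ 3 * y ^ 2 - w ^ 4 * y ^ 3 + w ^ 4 * y ^ 4) * hC (-1) 0 2 (-1) 0 1 1 rfl rfl rfl rfl
      + (w ^ 2 * y - w ^ 2 * y ^ 3 + w ^ 2 * y ^ 5 - w ^ 3 * y ^ 2 + w ^ 3 * y ^ 5) * hB 1 2 0 1 2 (-1) 1 rfl rfl rfl rfl
      + (-w ^ 3 * y ^ 2) * hB 1 2 (-1) 0 1 (-2) 0 rfl rfl rfl rfl
      + (2 * w * y - w * y ^ 3 - w ^ 2 * y ^ 2 - 2 * w ^ 2 * y ^ 3 - w ^ 3 * y ^ 2 + w ^ 4 * y ^ 3) * hC 0 1 2 (-1) 0 1 1 rfl rfl rfl rfl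
      + (w ^ 2 * y) * hB 1 2 (-1) 0 1 (-1) 0 rfl rfl rfl rfl
      + (w * y + 2 * w ^ 2 * y ^ 2 - w ^ 3 * y ^ 4) * hF 0 1 2 0 1 (-1) 0 1 rfl rfl rfl rfl rfl
      + (w ^ 2 * y ^ 2 + w ^ 2 * y ^ 3 - w ^ 3 * y ^ 3 + w ^ 3 * y ^ 4) * hC (-1) 0 1 (-1) 0 1 1 rfl rfl rfl rfl
      + (w * y ^ 2 - w * y ^ 4 + w ^ 2 * y ^ 2 - w ^ 2 * y ^ 4 - w ^ 3 * y ^ 4) * hC 0 1 0 (-2) (-1) 0 0 rfl rfl rfl rfl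
      + (-2 * w * y + w * y ^ 3 - w ^ 2 * y + w ^ 2 * y ^ 2 + 2 * w ^ 2 * y ^ 3 + w ^ 3 * y ^ 2 - w ^ 3 * y ^ 3) * hB 1 2 0 1 2 1 1 rfl rfl rfl rfl
      + (-w ^ 3 * y + w ^ 4 * y ^ 2 - w ^ 4 * y ^ 3) * hF (-1) 0 1 1 2 (-1) 0 0 rfl rfl rfl rfl rfl
      + (-w ^ 2 * y - w ^ 2 * y ^ 2 + w ^ 3 * y ^ 2 - w ^ 3 * y ^ 3) * hF (-1) 0 1 0 1 (-1) 0 0 rfl rfl rfl rfl rfl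
      + (w * y ^ 2) * hC 2 3 1 (-1) 0 1 1 rfl rfl rfl rfl
      + (-w ^ 2 * y ^ 2 + w ^ 2 * y ^ 4 + w ^ 3 * y ^ 4) * hB 0 1 0 1 2 (-2) 1 rfl rfl rfl rfl
      + (w ^ 2 * y + w ^ 2 * y ^ 2 - w ^ 3 * y ^ 2 + w ^ 3 * y ^ 3) * hF (-1) 0 1 0 1 0 1 0 rfl rfl rfl rfl rfl
      + (-w ^ 2 * y + w ^ 3 * y ^ 2) * hF 0 1 2 1 2 0 1 1 rfl rfl rfl rfl rfl
      + (w ^ 2 * y - w ^ 3 * y ^ 2) * hC 1 2 2 (-1) 0 1 1 rfl rfl rfl rfl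
      + (w * y ^ 2 - w * y ^ 4 + 2 * w ^ 2 * y ^ 2 - 2 * w ^ 2 * y ^ 4 - 2 * w ^ 3 * y ^ 4) * hB 1 2 0 1 2 0 1 rfl rfl rfl rfl
      + (w) * hF 0 1 2 (-1) 0 (-1) 0 1 rfl rfl rfl rfl rfl
      + (-2 * y + y ^ 3 - w * y + w * y ^ 2 + 2 * w * y ^ 3 + w ^ 2 * y ^ 2 - w ^ 2 * y ^ 3) * hC 0 1 0 (-1) 0 1 1 rfl rfl rfl rfl
      + (-w * y ^ 2 + w * y ^ 4 - w ^ 2 * y ^ 2 + w ^ 2 * y ^ 3 + w ^ 2 * y ^ 4 + w ^ 3 * y ^ 3 - w ^ 3 * y ^ 5) * hC 0 1 1 (-2) (-1) 0 0 rfl rfl rfl rfl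
      + (-w ^ 2 * y) * hF 0 1 2 (-1) 0 (-2) (-1) 1 rfl rfl rfl rfl rfl
      + (w ^ 3 * y ^ 2 - w ^ 4 * y ^ 3) * hF 0 1 2 1 2 (-1) 0 1 rfl rfl rfl rfl rfl
      + (-2 * w * y - w ^ 2 * y + w ^ 2 * y ^ 2 + w ^ 2 * y ^ 3 + w ^ 3 * y ^ 2 - w ^ 3 * y ^ 3) * hF 0 1 2 0 1 0 1 1 rfl rfl rfl rfl rfl
      + (2 * y - y ^ 3 - 2 * w * y ^ 2 - 2 * w * y ^ 3 - 2 * w ^ 2 * y ^ 2 + w ^ 2 * y ^ 4 - w ^ 3 * y ^ 2 + w ^ 3 * y ^ 3 + w ^ 3 * y ^ 4 + w ^ 4 * y ^ 3 - w ^ 4 * y ^ 4) * hC 0 1 1 (-1) 0 1 1 rfl rfl rfl rfl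
      + (-w ^ 2 * y + w ^ 2 * y ^ 2) * h₁ 1 0 0 0 (-1) rfl rfl
      + (-w ^ 2 * y ^ 2 + w ^ 3 * y ^ 3) * h₂ 3 2 1 1 0 rfl rfl
      + (-w ^ 2 * y ^ 2) * h₁ 3 2 1 1 0 rfl rfl
      + (w ^ 2 * y ^ 3) * h₁ 2 1 1 1 0 rfl rfl
      + (w ^ 2 * y ^ 3) * h₁ 3 2 1 0 (-1) rfl rfl
      + (-w ^ 2 * y ^ 4) * h₁ 2 1 1 0 (-1) rfl rfl
      + (-w ^ 2 * y + w ^ 3 * y ^ 2) * h₂ 2 1 1 0 (-1) rfl rfl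
      + (-w ^ 2 * y) * h₁ 2 1 1 0 (-1) rfl rfl
      + (w ^ 2 * y ^ 2) * h₁ 1 0 1 0 (-1) rfl rfl
      + (w ^ 2 * y ^ 2) * h₁ 2 1 1 (-1) (-2) rfl rfl
      + (-w ^ 2 * y ^ 3) * h₁ 1 0 1 (-1) (-2) rfl rfl
      + (-w ^ 2 * y + w ^ 2 * y ^ 2) * h₁ 1 0 1 0 (-1) rfl rfl
      + (-w ^ 2 + w ^ 3 * y) * h₂ 2 1 0 0 (-1) rfl rfl
      + (-w ^ 2) * h₁ 2 1 0 0 (-1) rfl rfl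
      + (w ^ 2 * y) * h₁ 1 0 0 0 (-1) rfl rfl
      + (w ^ 2 * y) * h₁ 2 1 0 (-1) (-2) rfl rfl
      + (-w ^ 2 * y ^ 2) * h₁ 1 0 0 (-1) (-2) rfl rfl

end certificates

/-! ### Functional equations of the generating functions -/

section sequences
variable {K : Type*} [Field K]

/-- The numerator of the coefficient of `z ^ m` in `cwGen w a b c`: the triple sum with both levels
equal to `m`, whose exponent is the quadratic form `m² - m n + n² + k² + n l + l²` plus
`a n + b k + c l`. -/
noncomputable def cwNum (w : K) (a b c : ℤ) (m : ℕ) : K :=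
  w ^ (m ^ 2) * tripleSum w m m (a - m) b c

lemma contiguous_tripleSum {w : K} (hw0 : w ≠ 0) (hw : ∀ k : ℕ, 1 - w ^ (k + 1) ≠ 0) (m : ℕ) :
    Contiguous w (w ^ m) fun i b c => tripleSum w m m (i - m) b c where
  contig_b := by
    rintro i _ b _ _ c k rfl rfl rfl hk
    have h := tripleSum_contig_b hw0 hw m m (i - m) b c
    rw [← hk, zpow_natCast] at h
    rw [show i + 1 - (m : ℤ) = i - m + 1 by ring]
    exact h
  contig_a := by
    rintro i _ _ b _ c _ k rfl rfl rfl rfl hk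
    have h := tripleSum_contig_a hw0 hw m m (i - m) b c
    rw [show 1 + (i - (m : ℤ)) = k - m by omega, zpow_sub₀ hw0, zpow_natCast, zpow_natCast] at h
    rw [show i + 1 - (m : ℤ) = i - m + 1 by ring, show i + 2 - (m : ℤ) = i - m + 2 by ring]
    have := pow_ne_zero m hw0
    field_simp at h
    linear_combination h
  contig_c := by
    rintro i _ b c _ _ k rfl rfl rfl hk
    have h := tripleSum_contig_c hw0 hw m m (i - m) b c
    rw [show 1 + c = k - 1 by omega, zpow_sub₀ hw0, zpow_natCast, zpow_one] at h
    rw [show i + 1 - (m : ℤ) = i - m + 1 by ring]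
    field_simp at h
    linear_combination h

/-- Both levels of the triple sum lowered at once. -/
lemma tripleSum_lower {w : K} (hw0 : w ≠ 0) (hw : ∀ k : ℕ, 1 - w ^ (k + 1) ≠ 0) (m : ℕ)
    (a b c : ℤ) :
    (1 - w ^ (m + 1)) * ((1 - w ^ (m + 1)) * tripleSum w m m a b c)
      = tripleSum w (m + 1) (m + 1) a b c - w ^ (m + 1) * tripleSum w (m + 1) (m + 1) (a - 1) b c
        - w ^ (m + 1) * (tripleSum w (m + 1) (m + 1) a b (c - 1)
          - w ^ (m + 1) * tripleSum w (m + 1) (m + 1) (a - 1) b (c - 1)) := by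
  rw [tripleSum_lower_left hw0 hw, mul_sub, mul_left_comm, tripleSum_lower_right hw0 hw,
    tripleSum_lower_right hw0 hw]
  ring

/-- `relation_410` in terms of `cwNum`. -/
lemma cwNum_410 {w : K} (hw0 : w ≠ 0) (hw : ∀ k : ℕ, 1 - w ^ (k + 1) ≠ 0) (n : ℕ) :
    cwNum w 1 1 1 (n + 1) = (w ^ (n + 1)) ^ 2 * cwNum w 0 1 0 (n + 1)
      + (1 - w ^ (n + 1)) * w ^ (2 * n + 1) * (((w ^ (n + 1)) ^ 3 + w ^ (n + 1)) * cwNum w 1 1 1 n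
        + ((w ^ (n + 1)) ^ 2 + 1) * cwNum w 0 1 0 n + w ^ (n + 1) * cwNum w 0 0 0 n) := by
  have h := relation_410 (w := w) (y := w ^ n) hw0 (pow_ne_zero _ hw0)
    (t := fun i b c => tripleSum w (n + 1) (n + 1) (i - (n + 1 : ℕ)) b c)
    (T₁ := fun i b c => (1 - w ^ (n + 1)) * tripleSum w n n (i - (n + 1 : ℕ)) b c)
    (by rw [← pow_succ']; exact hw n)
    (by rw [← pow_succ']; exact contiguous_tripleSum hw0 hw (n + 1))
    (by
      rintro i _ b c _ rfl rfl
      rw [← pow_succ', tripleSum_lower hw0 hw]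
      simp only [sub_right_comm])
  simp only [cwNum]
  push_cast at h ⊢
  rw [show (2 : ℤ) - (n + 1) = 1 - n by ring, show (1 : ℤ) - (n + 1) = 0 - n by ring] at h
  rw [show (1 : ℤ) - (n + 1) = 0 - n by ring]
  linear_combination w ^ ((n + 1) ^ 2) * h

/-- `relation_311` in terms of `cwNum`, for consecutive levels starting at `n`. -/
lemma cwNum_311 {w : K} (hw0 : w ≠ 0) (hw : ∀ k : ℕ, 1 - w ^ (k + 1) ≠ 0) (n : ℕ) :
    w ^ (n + 1) * ((1 + (w ^ (n + 2)) ^ 3) * cwNum w 0 1 0 (n + 2)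
        - w ^ (n + 2) * cwNum w 0 0 0 (n + 2) - w ^ (n + 2) * cwNum w 1 1 1 (n + 2))
      + w ^ (n + 1) * (1 - w ^ (n + 2)) * w ^ (2 * n + 3) *
        ((w ^ (n + 2)) ^ 4 * cwNum w 1 1 1 (n + 1)
          + ((w ^ (n + 2)) ^ 3 - w ^ (n + 1)) * cwNum w 0 1 0 (n + 1)
          + ((w ^ (n + 2)) ^ 2 - 1) * cwNum w 0 0 0 (n + 1))
      - (1 - w ^ (n + 2)) * (1 - w ^ (n + 1)) * w ^ (4 * n + 4) *
        ((w ^ (n + 1) + (w ^ (n + 1)) ^ 3) * cwNum w 1 1 1 n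
          + (1 + (w ^ (n + 1)) ^ 2) * cwNum w 0 1 0 n + w ^ (n + 1) * cwNum w 0 0 0 n) = 0 := by
  have h := relation_311 (w := w) (y := w ^ (n + 1)) hw0 (pow_ne_zero _ hw0)
    (t := fun i b c => tripleSum w (n + 2) (n + 2) (i - (n + 2 : ℕ)) b c)
    (T₁ := fun i b c => (1 - w ^ (n + 2)) * tripleSum w (n + 1) (n + 1) (i - (n + 2 : ℕ)) b c)
    (T₂ := fun i b c => (1 - w ^ (n + 2)) * ((1 - w ^ (n + 1)) *
      tripleSum w n n (i - (n + 2 : ℕ)) b c))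
    (by rw [← pow_succ']; exact hw (n + 1))
    (by rw [← pow_succ']; exact contiguous_tripleSum hw0 hw (n + 2))
    (by
      rintro i _ b c _ rfl rfl
      rw [← pow_succ', tripleSum_lower hw0 hw]
      simp only [sub_right_comm])
    (hw n)
    (by
      rintro i _ b c _ rfl rfl
      rw [mul_left_comm, tripleSum_lower hw0 hw]
      simp only [sub_right_comm]
      ring)
  simp only [cwNum]
  push_cast at h ⊢
  rw [show (3 : ℤ) - (n + 2) = 1 - n by ring, show (2 : ℤ) - (n + 2) = 0 - n by ring] at h
  rw [show (1 : ℤ) - (n + 1) = 0 - n by ring, show (0 : ℤ) - (n + 1) = 1 - (n + 2) by ring]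
  linear_combination w ^ ((n + 2) ^ 2) * h

/-- `relation_221` in terms of `cwNum`, for consecutive levels starting at `n`. -/
lemma cwNum_221 {w : K} (hw0 : w ≠ 0) (hw : ∀ k : ℕ, 1 - w ^ (k + 1) ≠ 0) (n : ℕ) :
    w ^ (n + 1) * ((1 - w ^ (n + 2) + (w ^ (n + 2)) ^ 2) * cwNum w 0 0 0 (n + 2)
        - w ^ (n + 2) * cwNum w 0 1 0 (n + 2))
      - w ^ (n + 1) * (1 - w ^ (n + 2)) * w ^ (2 * n + 3) *
        (cwNum w 0 0 0 (n + 1) + cwNum w 0 1 0 (n + 1))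
      - (1 - w ^ (n + 2)) * (1 - w ^ (n + 1)) * w ^ (4 * n + 4) *
        ((w ^ (n + 1)) ^ 2 * cwNum w 1 1 1 n
          + w ^ (n + 1) * cwNum w 0 1 0 n + cwNum w 0 0 0 n) = 0 := by
  have h := relation_221 (w := w) (y := w ^ (n + 1)) hw0 (pow_ne_zero _ hw0)
    (t := fun i b c => tripleSum w (n + 2) (n + 2) (i - (n + 2 : ℕ)) b c)
    (T₁ := fun i b c => (1 - w ^ (n + 2)) * tripleSum w (n + 1) (n + 1) (i - (n + 2 : ℕ)) b c)
    (T₂ := fun i b c => (1 - w ^ (n + 2)) * ((1 - w ^ (n + 1)) *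
      tripleSum w n n (i - (n + 2 : ℕ)) b c))
    (by rw [← pow_succ']; exact hw (n + 1))
    (by rw [← pow_succ']; exact contiguous_tripleSum hw0 hw (n + 2))
    (by
      rintro i _ b c _ rfl rfl
      rw [← pow_succ', tripleSum_lower hw0 hw]
      simp only [sub_right_comm])
    (hw n)
    (by
      rintro i _ b c _ rfl rfl
      rw [mul_left_comm, tripleSum_lower hw0 hw]
      simp only [sub_right_comm]
      ring)
  simp only [cwNum]
  push_cast at h ⊢
  rw [show (3 : ℤ) - (n + 2) = 1 - n by ring, show (2 : ℤ) - (n + 2) = 0 - n by ring] at h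
  rw [show (0 : ℤ) - (n + 1) = 1 - (n + 2) by ring]
  linear_combination w ^ ((n + 2) ^ 2) * h

lemma cwNum_zero (w : K) (a b c : ℤ) : cwNum w a b c 0 = 1 := by
  simp [cwNum, tripleSum, innerSum, fBinom, fPoch]

lemma cwNum_one {w : K} (hw : ∀ k : ℕ, 1 - w ^ (k + 1) ≠ 0) (a b c : ℤ) :
    cwNum w a b c 1
      = w * (1 + w ^ (1 + c) + w ^ a * (1 + w ^ (1 + b)) * (1 + w ^ (2 + c))) := by
  have := hw 0
  simp only [zero_add, pow_one] at this
  simp [cwNum, tripleSum, innerSum, fBinom, fPoch, Finset.sum_range_succ, this]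
  rw [show 1 + (c + 1) = 2 + c by ring]
  left; left; trivial

/-- The generating function `∑_m z^m cwNum w a b c m / (w;w)_m`, as a power series in `z`. It satisfies
functional equations under `z ↦ w z`. -/
noncomputable def cwGen (w : K) (a b c : ℤ) : PowerSeries K :=
  PowerSeries.mk fun m => cwNum w a b c m / fPoch w m

lemma coeff_cwGen (w : K) (a b c : ℤ) (m : ℕ) :
    PowerSeries.coeff m (cwGen w a b c) = cwNum w a b c m / fPoch w m := by
  simp [cwGen]

/-- The power series `w z`. -/
noncomputable def zw (w : K) : PowerSeries K := PowerSeries.C w * PowerSeries.X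

lemma coeff_zw_zero (w : K) (f : PowerSeries K) : PowerSeries.coeff 0 (zw w * f) = 0 := by
  rw [zw, mul_assoc, PowerSeries.coeff_C_mul, PowerSeries.coeff_zero_X_mul, mul_zero]

lemma coeff_zw_succ (w : K) (f : PowerSeries K) (n : ℕ) :
    PowerSeries.coeff (n + 1) (zw w * f) = w * PowerSeries.coeff n f := by
  rw [zw, mul_assoc, PowerSeries.coeff_C_mul, PowerSeries.coeff_succ_X_mul]

lemma rescale_zw (w : K) : PowerSeries.rescale w (zw w) = PowerSeries.C w * zw w := by
  rw [zw, map_mul, PowerSeries.rescale_X]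
  congr 1
  ext n
  simp only [PowerSeries.coeff_rescale, PowerSeries.coeff_C]
  split_ifs with h <;> simp [h]

variable {w : K}

local notation "σ" => PowerSeries.rescale w
local notation "GU" => cwGen w 1 1 1
local notation "GV" => cwGen w 0 1 0
local notation "GX" => cwGen w 0 0 0

/-- The functional equation of profile `(4,1,0)`: the coefficients of `z ^ (n + 1)` on the two sides
agree by `cwNum_410`. -/
lemma cwGen_410 (hw0 : w ≠ 0) (hw : ∀ k : ℕ, 1 - w ^ (k + 1) ≠ 0) :
    GU = σ (σ GV) + σ (σ (σ (zw w * σ (σ GU)))) + σ (zw w * σ (σ GU))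
      + σ (σ (zw w * σ (σ GV))) + zw w * σ (σ GV) + σ (zw w * σ (σ GX)) := by
  ext n
  rcases n with _ | n
  · simp [coeff_cwGen, PowerSeries.coeff_rescale, -PowerSeries.coeff_zero_eq_constantCoeff, -map_mul,
      coeff_zw_zero, cwNum_zero]
  · simp only [map_add, coeff_cwGen, PowerSeries.coeff_rescale, coeff_zw_succ, fPoch_succ]
    have h1 := fPoch_ne_zero hw n
    have h2 := hw n
    have h := cwNum_410 hw0 hw n
    field_simp
    linear_combination h

/-- The functional equation of profile `(3,1,1)`. The coefficient of `z ^ (n + 2)` is `cwNum_311`; those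
of `z ^ 0` and `z ^ 1` are computed directly. -/
lemma cwGen_311 (hw0 : w ≠ 0) (hw : ∀ k : ℕ, 1 - w ^ (k + 1) ≠ 0) :
    GV + σ (σ (σ GV)) - σ GX - σ GU + σ (σ (σ (σ (zw w * σ (σ GU)))))
      + σ (σ (σ (zw w * σ (σ GV)))) - zw w * σ (σ (σ GV)) + σ (σ (zw w * σ (σ GX)))
      - zw w * σ (σ GX)
      - (zw w * σ (σ (zw w * σ (σ GU))) + zw w * σ (σ (σ (σ (zw w * σ (σ GU)))))
        + zw w * σ (zw w * σ (σ GV)) + zw w * σ (σ (σ (zw w * σ (σ GV))))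
        + zw w * σ (σ (zw w * σ (σ GX)))) = 0 := by
  ext n
  rcases n with _ | _ | n
  · simp [coeff_cwGen, PowerSeries.coeff_rescale, -PowerSeries.coeff_zero_eq_constantCoeff, -map_mul,
      coeff_zw_zero, cwNum_zero]
  · have h1 := hw 0
    simp only [zero_add, pow_one] at h1
    simp only [map_add, map_sub, coeff_cwGen, PowerSeries.coeff_rescale, coeff_zw_succ,
      coeff_zw_zero, cwNum_zero, cwNum_one hw]
    simp [fPoch]
    field_simp
    ring_nf
  · simp only [map_add, map_sub, map_zero, coeff_cwGen, PowerSeries.coeff_rescale, coeff_zw_succ,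
      fPoch_succ]
    have h1 := fPoch_ne_zero hw n
    have h2 := hw n
    have h3 := hw (n + 1)
    have h := cwNum_311 hw0 hw n
    field_simp
    refine mul_left_cancel₀ (pow_ne_zero (n + 1) hw0) ?_
    linear_combination h

/-- The functional equation of profile `(2,2,1)`, read off from `cwNum_221` in the same way. -/
lemma cwGen_221 (hw0 : w ≠ 0) (hw : ∀ k : ℕ, 1 - w ^ (k + 1) ≠ 0) :
    GX - σ GX + σ (σ GX) - σ GV - zw w * σ (σ GX) - zw w * σ (σ GV)
      - (zw w * σ (σ (σ (zw w * σ (σ GU)))) + zw w * σ (σ (zw w * σ (σ GV)))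
        + zw w * σ (zw w * σ (σ GX))) = 0 := by
  ext n
  rcases n with _ | _ | n
  · simp [coeff_cwGen, PowerSeries.coeff_rescale, -PowerSeries.coeff_zero_eq_constantCoeff, -map_mul,
      coeff_zw_zero, cwNum_zero]
  · have h1 := hw 0
    simp only [zero_add, pow_one] at h1
    simp only [map_add, map_sub, coeff_cwGen, PowerSeries.coeff_rescale, coeff_zw_succ,
      coeff_zw_zero, cwNum_zero, cwNum_one hw]
    simp [fPoch]
    field_simp
    ring_nf
  · simp only [map_add, map_sub, map_zero, coeff_cwGen, PowerSeries.coeff_rescale, coeff_zw_succ,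
      fPoch_succ]
    have h1 := fPoch_ne_zero hw n
    have h2 := hw n
    have h3 := hw (n + 1)
    have h := cwNum_221 hw0 hw n
    field_simp
    refine mul_left_cancel₀ (pow_ne_zero (n + 1) hw0) ?_
    linear_combination h

end sequences

/-! ### The Corteel–Welsh system for the multisums -/

/-- The seven profiles of rank 3 and level 5, i.e. triples of natural numbers with sum 5 up to cyclic
rotation; `p401` is the profile `(4,0,1)`. -/
inductive Profile
  | p500 | p410 | p401 | p320 | p302 | p311 | p221

open Profile in
/-- The right-hand side of the Corteel–Welsh system for cylindric partitions of level 5. If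
`H_c(z)` is the generating function of profile `c`, the system reads
`(1 - z) H_c(z) = ∑ ± H_{c'}(z w^j)`, and on the coefficients of `z ^ n` the substitution
`z ↦ z w ^ j` multiplies by `x ^ j` with `x = w ^ n`. -/
def cwRhs {K : Type*} [Field K] (x : K) (f : Profile → K) : Profile → K
  | p500 => x * f p410
  | p410 => x * (f p320 + f p401) - x ^ 2 * f p311
  | p401 => x * (f p311 + f p500) - x ^ 2 * f p410
  | p320 => x * (f p302 + f p311) - x ^ 2 * f p221
  | p302 => x * (f p221 + f p401) - x ^ 2 * f p311
  | p311 => x * (f p221 + f p302 + f p410) - x ^ 2 * (f p221 + f p320 + f p401) + x ^ 3 * f p311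
  | p221 => x * (f p311 + f p221 + f p320) - x ^ 2 * (f p221 + f p302 + f p311) + x ^ 3 * f p221

section profiles
open Profile
variable {K : Type*} [Field K] {w : K}

local notation "σ" => PowerSeries.rescale w
local notation "GU" => cwGen w 1 1 1
local notation "GV" => cwGen w 0 1 0
local notation "GX" => cwGen w 0 0 0

variable (w) in
/-- The power series `G_{(3,0,2)}(z)`, defined by the equation of profile `(3,0,2)` in the
Corteel–Welsh system. -/
noncomputable def gen302 : PowerSeries K :=
  σ GX + σ (σ GV + zw w * σ (σ GU)) - (1 - zw w) * σ (σ GV)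

variable (w) in
/-- The power series `G_c(z)` for which `H_c(z) = G_c(z) / (z;w)_∞` solves the Corteel–Welsh system.
Those of profiles `(4,1,0)`, `(3,1,1)` and `(2,2,1)` are triple sums; the others are given
by their own equations in the system. -/
noncomputable def profileGen : Profile → PowerSeries K
  | p500 => σ GU
  | p410 => GU
  | p401 => σ GV + zw w * σ (σ GU)
  | p320 => σ (gen302 w + GV) - (1 - zw w) * σ (σ GX)
  | p302 => gen302 w
  | p311 => GV
  | p221 => GX

/-- The power series `1 / (z;w)_∞ = ∑_n z^n / (w;w)_n`, in Euler's expansion. -/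
noncomputable def expGen (w : K) : PowerSeries K := PowerSeries.mk fun n => (fPoch w n)⁻¹

/-- The functional equation `E(w z) = (1 - z) E(z)` of `E(z) = 1 / (z;w)_∞`. -/
lemma rescale_expGen (hw : ∀ k : ℕ, 1 - w ^ (k + 1) ≠ 0) :
    σ (expGen w) = (1 - PowerSeries.X) * expGen w := by
  ext n
  rcases n with _ | n
  · simp [expGen, PowerSeries.coeff_rescale, sub_mul]
  · rw [sub_mul, one_mul, map_sub, PowerSeries.coeff_succ_X_mul, PowerSeries.coeff_rescale]
    simp only [expGen, PowerSeries.coeff_mk, fPoch_succ]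
    have h1 := fPoch_ne_zero hw n
    have h2 := hw n
    field_simp
    ring

lemma rescale_C (a : K) : σ (PowerSeries.C a) = PowerSeries.C a := by
  ext n
  rcases n with _ | n <;> simp [PowerSeries.coeff_rescale, PowerSeries.coeff_C]

/-- The coefficient of `z ^ n` in `H_c(z) = G_c(z) / (z;w)_∞`. -/
noncomputable def aSeq (w : K) (n : ℕ) (p : Profile) : K :=
  PowerSeries.coeff n (profileGen w p * expGen w)

/-- The multisum side satisfies the coefficientwise Corteel–Welsh recurrence. Four of the seven equations
hold by the definition of `profileGen`; the other three are `cwGen_410`, `cwGen_311`, `cwGen_221`. -/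
lemma aSeq_succ (hw0 : w ≠ 0) (hw : ∀ k : ℕ, 1 - w ^ (k + 1) ≠ 0) (n : ℕ) (p : Profile) :
    aSeq w (n + 1) p - aSeq w n p = cwRhs (w ^ (n + 1)) (aSeq w (n + 1)) p := by
  have hE := rescale_expGen hw
  have h : ∀ {L R : PowerSeries K}, (1 - PowerSeries.X) * (L * expGen w) = R →
      PowerSeries.coeff (n + 1) (L * expGen w) - PowerSeries.coeff n (L * expGen w)
        = PowerSeries.coeff (n + 1) R := by
    rintro L R rfl
    rw [sub_mul, one_mul, map_sub, PowerSeries.coeff_succ_X_mul]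
  have h1 (G : PowerSeries K) : w ^ (n + 1) * PowerSeries.coeff (n + 1) G
      = PowerSeries.coeff (n + 1) (σ G) := by
    rw [PowerSeries.coeff_rescale]
  have h2 (G : PowerSeries K) : (w ^ (n + 1)) ^ 2 * PowerSeries.coeff (n + 1) G
      = PowerSeries.coeff (n + 1) (σ (σ G)) := by
    rw [PowerSeries.coeff_rescale, PowerSeries.coeff_rescale]; ring
  have h3 (G : PowerSeries K) : (w ^ (n + 1)) ^ 3 * PowerSeries.coeff (n + 1) G
      = PowerSeries.coeff (n + 1) (σ (σ (σ G))) := by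
    rw [PowerSeries.coeff_rescale, PowerSeries.coeff_rescale, PowerSeries.coeff_rescale]; ring
  have e410 := cwGen_410 hw0 hw
  have e311 := cwGen_311 hw0 hw
  have e221 := cwGen_221 hw0 hw
  cases p <;>
  · simp only [cwRhs, aSeq, h1, h2, h3, ← map_add, ← map_sub]
    apply h
    simp only [profileGen, gen302, map_add, map_sub, map_mul, map_one, hE, PowerSeries.rescale_X,
      rescale_zw, rescale_C] at e410 e311 e221 ⊢
    simp only [zw] at *
    first
      | ring1
      | linear_combination ((1 - PowerSeries.X) * expGen w) * e410
      | linear_combination ((1 - PowerSeries.X) * expGen w) * e311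
      | linear_combination ((1 - PowerSeries.X) * expGen w) * e221

lemma aSeq_zero (p : Profile) : aSeq w 0 p = 1 := by
  have h := coeff_zw_zero w
  have hc := PowerSeries.coeff_zero_eq_constantCoeff (R := K)
  simp only [hc, map_mul, mul_eq_zero] at h
  have hz : PowerSeries.constantCoeff (zw w) = 0 := by simp [zw]
  have hs (f : PowerSeries K) :
      PowerSeries.constantCoeff (σ f) = PowerSeries.constantCoeff f := by
    rw [← PowerSeries.coeff_zero_eq_constantCoeff, PowerSeries.coeff_rescale]; simp
  have hg (a b c : ℤ) : PowerSeries.constantCoeff (cwGen w a b c) = 1 := by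
    rw [← PowerSeries.coeff_zero_eq_constantCoeff, coeff_cwGen, cwNum_zero]; simp [fPoch]
  have he : PowerSeries.constantCoeff (expGen w) = 1 := by
    rw [← PowerSeries.coeff_zero_eq_constantCoeff]; simp [expGen, fPoch]
  cases p <;> simp [aSeq, profileGen, gen302, hz, hs, hg, he]

end profiles

/-! ### Alternating theta sums of type A₂ -/

section theta
variable {K : Type*} [Field K] {w : K}

/-- `1 / (w;w)_k` for an integer `k`, equal to `0` for negative `k`. -/
noncomputable def rInv (w : K) (k : ℤ) : K := if 0 ≤ k then (fPoch w k.toNat)⁻¹ else 0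

lemma rInv_of_neg {k : ℤ} (hk : k < 0) : rInv w k = 0 := if_neg (by omega)

lemma rInv_natCast (n : ℕ) : rInv w n = (fPoch w n)⁻¹ := by
  rw [rInv, if_pos (by omega), Int.toNat_natCast]

/-- For `k = 0` both sides vanish, so the recursion holds for every integer `k`. -/
lemma rInv_pred (hw : ∀ k : ℕ, 1 - w ^ (k + 1) ≠ 0) (k : ℤ) :
    (1 - w ^ k) * rInv w k = rInv w (k - 1) := by
  rcases lt_trichotomy k 0 with hk | rfl | hk
  · rw [rInv_of_neg hk, rInv_of_neg (by omega), mul_zero]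
  · rw [rInv_of_neg (k := 0 - 1) (by omega)]; simp
  · obtain ⟨n, rfl⟩ : ∃ n : ℕ, k = (n + 1 : ℕ) := ⟨(k - 1).toNat, by omega⟩
    rw [show ((n + 1 : ℕ) : ℤ) - 1 = n by push_cast; ring, rInv_natCast, rInv_natCast,
      fPoch_succ, zpow_natCast]
    have h1 := fPoch_ne_zero hw n
    have h2 := hw n
    field_simp

/-- The integer `((x² + x y + y²) - (2 x + y)) / 3`, where `x = rootX e p` and `y = p.2`, for
`e ∈ {0, 1}`; the parametrization avoids the division. -/
def quadForm (e : ℤ) (p : ℤ × ℤ) : ℤ :=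
  p.2 ^ 2 + 3 * p.1 * p.2 + 3 * p.1 ^ 2 + (2 * e - 1) * (p.2 + 2 * p.1)

/-- The first coordinate `x` of the lattice point parametrized by `p = (u, y)`. The points
`(x, y, -x - y)` with `x = y + 3 u + 2 e` run through a coset of the lattice `x ≡ y (mod 3)`. -/
def rootX (e : ℤ) (p : ℤ × ℤ) : ℤ := p.2 + 3 * p.1 + 2 * e

/-- The summand `w^(8 Q + a x + b (x + y)) / ((w;w)_{n₁ + x} (w;w)_{n₂ + y} (w;w)_{n₃ - x - y})`, where
`Q = quadForm e p`, `x = rootX e p` and `y = p.2`. -/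
noncomputable def dTerm (w : K) (e n₁ n₂ n₃ a b : ℤ) (p : ℤ × ℤ) : K :=
  w ^ (8 * quadForm e p + a * rootX e p + b * (rootX e p + p.2))
    * (rInv w (n₁ + rootX e p) * rInv w (n₂ + p.2) * rInv w (n₃ - rootX e p - p.2))

/-- Nonzero summands come from the triangle cut out by the three Pochhammer symbols. -/
lemma dTerm_ne_zero {e n₁ n₂ n₃ a b : ℤ} {p : ℤ × ℤ} (h : dTerm w e n₁ n₂ n₃ a b p ≠ 0) :
    -n₁ ≤ rootX e p ∧ -n₂ ≤ p.2 ∧ rootX e p + p.2 ≤ n₃ := by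
  refine ⟨?_, ?_, ?_⟩ <;> by_contra hc
  · exact h (by rw [dTerm, rInv_of_neg (k := n₁ + rootX e p) (by omega)]; simp)
  · exact h (by rw [dTerm, rInv_of_neg (k := n₂ + p.2) (by omega)]; simp)
  · exact h (by rw [dTerm, rInv_of_neg (k := n₃ - rootX e p - p.2) (by omega)]; simp)

lemma finite_support_dTerm (w : K) (e n₁ n₂ n₃ a b : ℤ) :
    Function.HasFiniteSupport (dTerm w e n₁ n₂ n₃ a b) := by
  set N := |e| + |n₁| + |n₂| + |n₃| with hN
  refine (Set.finite_Icc ((-(2 * N), -(2 * N)) : ℤ × ℤ) (2 * N, 2 * N)).subset fun p hp => ?_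
  obtain ⟨h1, h2, h3⟩ := dTerm_ne_zero hp
  simp only [rootX] at h1 h2 h3
  rw [← Set.Icc_prod_Icc]
  simp only [Set.mem_prod, Set.mem_Icc]
  have := abs_le.mp (le_refl |e|)
  have := abs_le.mp (le_refl |n₁|)
  have := abs_le.mp (le_refl |n₂|)
  have := abs_le.mp (le_refl |n₃|)
  omega

/-- The sum of `dTerm` over one coset. It has finite support, so `finsum` takes its intended value. -/
noncomputable def dSum (w : K) (e n₁ n₂ n₃ a b : ℤ) : K := ∑ᶠ p, dTerm w e n₁ n₂ n₃ a b p

/-- The alternating A₂-type theta sum: the coset `e = 0` counts with sign `+` and its mirror image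
`e = 1` with sign `-`. -/
noncomputable def dAlt (w : K) (n₁ n₂ n₃ a b : ℤ) : K :=
  dSum w 0 n₁ n₂ n₃ a b - dSum w 1 n₁ n₂ n₃ a b

/-- A termwise three-term relation passes to the sums. -/
lemma dSum_step {e n₁ n₂ n₃ n₁' n₂' n₃' a b a' b' : ℤ} {x : K}
    (h : ∀ p, dTerm w e n₁ n₂ n₃ a b p - x * dTerm w e n₁ n₂ n₃ a' b' p
      = dTerm w e n₁' n₂' n₃' a b p) :
    dSum w e n₁ n₂ n₃ a b - x * dSum w e n₁ n₂ n₃ a' b' = dSum w e n₁' n₂' n₃' a b := by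
  rw [dSum, dSum, dSum, mul_finsum,
    ← finsum_sub_distrib (finite_support_dTerm ..) ?_]
  · exact finsum_congr h
  · refine (finite_support_dTerm w e n₁ n₂ n₃ a' b').subset fun p hp => ?_
    exact right_ne_zero_of_mul hp

/-- Lowering `n₁` by one, through the recursion of `1 / (w;w)_{n₁ + x}`. -/
lemma dAlt_step₁ (hw0 : w ≠ 0) (hw : ∀ k : ℕ, 1 - w ^ (k + 1) ≠ 0) (n₁ n₂ n₃ a b : ℤ) :
    dAlt w n₁ n₂ n₃ a b - w ^ n₁ * dAlt w n₁ n₂ n₃ (a + 1) b = dAlt w (n₁ - 1) n₂ n₃ a b := by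
  have key (e : ℤ) : dSum w e n₁ n₂ n₃ a b - w ^ n₁ * dSum w e n₁ n₂ n₃ (a + 1) b
      = dSum w e (n₁ - 1) n₂ n₃ a b := by
    refine dSum_step fun p => ?_
    have h := rInv_pred hw (n₁ + rootX e p)
    simp only [dTerm]
    rw [show n₁ - 1 + rootX e p = n₁ + rootX e p - 1 by ring, ← h]
    simp only [add_mul, one_mul, zpow_add₀ hw0]
    ring
  rw [dAlt, dAlt, dAlt, ← key, ← key]
  ring

/-- Lowering `n₂` by one. -/
lemma dAlt_step₂ (hw0 : w ≠ 0) (hw : ∀ k : ℕ, 1 - w ^ (k + 1) ≠ 0) (n₁ n₂ n₃ a b : ℤ) :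
    dAlt w n₁ n₂ n₃ a b - w ^ n₂ * dAlt w n₁ n₂ n₃ (a - 1) (b + 1)
      = dAlt w n₁ (n₂ - 1) n₃ a b := by
  have key (e : ℤ) : dSum w e n₁ n₂ n₃ a b - w ^ n₂ * dSum w e n₁ n₂ n₃ (a - 1) (b + 1)
      = dSum w e n₁ (n₂ - 1) n₃ a b := by
    refine dSum_step fun p => ?_
    have h := rInv_pred hw (n₂ + p.2)
    simp only [dTerm]
    rw [show n₂ - 1 + p.2 = n₂ + p.2 - 1 by ring, ← h,
      show 8 * quadForm e p + (a - 1) * rootX e p + (b + 1) * (rootX e p + p.2)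
        = 8 * quadForm e p + a * rootX e p + b * (rootX e p + p.2) + p.2 by ring,
      zpow_add₀ hw0 _ p.2, zpow_add₀ hw0 _ p.2]
    ring
  rw [dAlt, dAlt, dAlt, ← key, ← key]
  ring

/-- Lowering `n₃` by one. -/
lemma dAlt_step₃ (hw0 : w ≠ 0) (hw : ∀ k : ℕ, 1 - w ^ (k + 1) ≠ 0) (n₁ n₂ n₃ a b : ℤ) :
    dAlt w n₁ n₂ n₃ a b - w ^ n₃ * dAlt w n₁ n₂ n₃ a (b - 1) = dAlt w n₁ n₂ (n₃ - 1) a b := by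
  have key (e : ℤ) : dSum w e n₁ n₂ n₃ a b - w ^ n₃ * dSum w e n₁ n₂ n₃ a (b - 1)
      = dSum w e n₁ n₂ (n₃ - 1) a b := by
    refine dSum_step fun p => ?_
    have h := rInv_pred hw (n₃ - rootX e p - p.2)
    simp only [dTerm]
    rw [show n₃ - 1 - rootX e p - p.2 = n₃ - rootX e p - p.2 - 1 by ring, ← h]
    have e1 : w ^ (8 * quadForm e p + a * rootX e p + b * (rootX e p + p.2))
        * w ^ (n₃ - rootX e p - p.2)
        = w ^ n₃ * w ^ (8 * quadForm e p + a * rootX e p + (b - 1) * (rootX e p + p.2)) := by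
      rw [← zpow_add₀ hw0, ← zpow_add₀ hw0]
      congr 1
      ring
    linear_combination (rInv w (n₁ + rootX e p) * rInv w (n₂ + p.2)
      * rInv w (n₃ - rootX e p - p.2)) * e1
  rw [dAlt, dAlt, dAlt, ← key, ← key]
  ring

/-- Lowering all three indices by one: the product of the three difference operators of `dAlt_step₁`,
`dAlt_step₂` and `dAlt_step₃`. -/
lemma dAlt_pred (hw0 : w ≠ 0) (hw : ∀ k : ℕ, 1 - w ^ (k + 1) ≠ 0) (n a b : ℤ) :
    dAlt w (n - 1) (n - 1) (n - 1) a b = dAlt w n n n a b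
      - w ^ n * (dAlt w n n n (a + 1) b + dAlt w n n n (a - 1) (b + 1) + dAlt w n n n a (b - 1))
      + (w ^ n) ^ 2 * (dAlt w n n n a (b + 1) + dAlt w n n n (a + 1) (b - 1)
        + dAlt w n n n (a - 1) b)
      - (w ^ n) ^ 3 * dAlt w n n n a b := by
  simp only [← dAlt_step₁ hw0 hw, ← dAlt_step₂ hw0 hw, ← dAlt_step₃ hw0 hw]
  rw [show b + 1 - 1 = b by ring, show a + 1 - 1 = a by ring]
  ring

/-- Invariance under the rotation `(a, b, 8 - a - b) ↦ (b, 8 - a - b, a)`, realized by the cyclic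
permutation `(x, y, -x - y) ↦ (y, -x - y, x)` of lattice points. -/
lemma dAlt_rotate (n a b : ℤ) : dAlt w n n n a b = dAlt w n n n b (8 - a - b) := by
  have key (e : ℤ) : dSum w e n n n a b = dSum w e n n n b (8 - a - b) := by
    let φ : ℤ × ℤ ≃ ℤ × ℤ :=
      { toFun := fun p => (p.2 + p.1, -2 * p.2 - 3 * p.1 - 2 * e)
        invFun := fun p => (-p.2 - 2 * p.1 - 2 * e, p.2 + 3 * p.1 + 2 * e)
        left_inv := fun p => by ext <;> simp <;> omega
        right_inv := fun p => by ext <;> simp <;> omega }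
    rw [dSum, dSum, ← finsum_comp_equiv φ (f := dTerm w e n n n b (8 - a - b))]
    refine finsum_congr fun p => ?_
    have hx : rootX e (φ p) = p.2 := by simp only [rootX, φ, Equiv.coe_fn_mk]; ring
    have hy : (φ p).2 = -rootX e p - p.2 := by simp only [rootX, φ, Equiv.coe_fn_mk]; ring
    have hq : quadForm e (φ p) = quadForm e p + rootX e p := by
      simp only [quadForm, rootX, φ, Equiv.coe_fn_mk]; ring
    rw [dTerm, dTerm, hx, hy, hq]
    rw [show n + (-rootX e p - p.2) = n - rootX e p - p.2 by ring,
      show n - p.2 - (-rootX e p - p.2) = n + rootX e p by ring]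
    congr 1
    · congr 1; ring
    · ring
  rw [dAlt, dAlt, key, key]

/-- The boundary relation. By `dAlt_step₁` it says that the sum with `n₁ = n - 1`, `n₂ = n₃ = n` and
`a = 0` vanishes: the reflection `(x, y) ↦ (y + 1, x - 1)` exchanges its two cosets. -/
lemma dAlt_wall (hw0 : w ≠ 0) (hw : ∀ k : ℕ, 1 - w ^ (k + 1) ≠ 0) (n b : ℤ) :
    dAlt w n n n 0 b = w ^ n * dAlt w n n n 1 b := by
  have h := dAlt_step₁ hw0 hw n n n 0 b
  rw [zero_add] at h
  rw [← sub_eq_zero, h, dAlt, sub_eq_zero]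
  let φ : ℤ × ℤ ≃ ℤ × ℤ :=
    { toFun := fun p => (-p.1, p.2 + 3 * p.1 - 1)
      invFun := fun p => (-p.1, p.2 + 3 * p.1 + 1)
      left_inv := fun p => by ext <;> simp; omega
      right_inv := fun p => by ext <;> simp; omega }
  rw [dSum, dSum, ← finsum_comp_equiv φ (f := dTerm w 1 (n - 1) n n 0 b)]
  refine finsum_congr fun p => ?_
  have hx : rootX 1 (φ p) = p.2 + 1 := by simp only [rootX, φ, Equiv.coe_fn_mk]; ring
  have hy : (φ p).2 = rootX 0 p - 1 := by simp only [rootX, φ, Equiv.coe_fn_mk]; ring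
  have hq : quadForm 1 (φ p) = quadForm 0 p := by
    simp only [quadForm, φ, Equiv.coe_fn_mk]; ring
  rw [dTerm, dTerm, hx, hy, hq]
  rw [show n - 1 + (p.2 + 1) = n + p.2 by ring, show n + (rootX 0 p - 1) = n - 1 + rootX 0 p by ring,
    show n - (p.2 + 1) - (rootX 0 p - 1) = n - rootX 0 p - p.2 by ring]
  congr 1
  · congr 1; ring
  · ring

/-- At level `0` only the origin contributes. -/
lemma dAlt_zero (a b : ℤ) : dAlt w 0 0 0 a b = 1 := by
  have h1 : dSum w 1 0 0 0 a b = 0 := by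
    rw [dSum, finsum_eq_zero_of_forall_eq_zero]
    intro p
    by_contra hp
    obtain ⟨h1, h2, h3⟩ := dTerm_ne_zero hp
    simp only [rootX] at h1 h2 h3
    omega
  have h0 : dSum w 0 0 0 0 a b = 1 := by
    rw [dSum, finsum_eq_single _ (0, 0)]
    · simp [dTerm, rootX, quadForm, rInv, fPoch]
    · rintro ⟨u, y⟩ hp
      by_contra hc
      obtain ⟨h1, h2, h3⟩ := dTerm_ne_zero hc
      simp only [rootX] at h1 h2 h3
      exact hp (by ext <;> simp <;> omega)
  rw [dAlt, h0, h1, sub_zero]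

end theta

/-! ### The Corteel–Welsh system for the theta sums -/

/-- The weight `(a, b)` attached to the profile `(c₀, c₁, c₂)`, namely `(c₁ + 1, c₂ + 1)`; the remaining
entry `8 - a - b` equals `c₀ + 1`. -/
def Profile.weight : Profile → ℤ × ℤ
  | p500 => (1, 1)
  | p410 => (2, 1)
  | p401 => (1, 2)
  | p320 => (3, 1)
  | p302 => (1, 3)
  | p311 => (2, 2)
  | p221 => (3, 2)

section thetaProfiles
open Profile
variable {K : Type*} [Field K] {w : K}

/-- The theta sum attached to a profile. -/
noncomputable def dSeq (w : K) (n : ℕ) (p : Profile) : K :=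
  dAlt w n n n p.weight.1 p.weight.2

lemma dSeq_zero (p : Profile) : dSeq w 0 p = 1 := by
  rw [dSeq, Nat.cast_zero, dAlt_zero]

/-- The theta side satisfies the same recurrence as `aSeq`. Each equation is `dAlt_pred`, in which the
weights leaving the alcove are brought back by rotations and boundary relations. -/
lemma dSeq_succ (hw0 : w ≠ 0) (hw : ∀ k : ℕ, 1 - w ^ (k + 1) ≠ 0) (n : ℕ) (p : Profile) :
    dSeq w (n + 1) p - dSeq w n p = cwRhs (w ^ (n + 1)) (dSeq w (n + 1)) p := by
  obtain ⟨D, hD⟩ : ∃ D : ℤ → ℤ → K, D = fun a b =>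
    dAlt w (n + 1 : ℕ) (n + 1 : ℕ) (n + 1 : ℕ) a b := ⟨_, rfl⟩
  obtain ⟨x, hx⟩ : ∃ x : K, x = w ^ (n + 1) := ⟨_, rfl⟩
  have rot (a b c : ℤ) (h : 8 - a - b = c) : D a b = D b c := by
    rw [hD, ← h]
    exact dAlt_rotate _ a b
  have wall (b : ℤ) : D 0 b = x * D 1 b := by
    have h := dAlt_wall hw0 hw (n + 1 : ℕ) b
    rw [zpow_natCast] at h
    rw [hD, hx]
    exact h
  have pred (a b a₁ a₂ b₁ b₂ : ℤ) (h₁ : a + 1 = a₁) (h₂ : a - 1 = a₂) (h₃ : b + 1 = b₁)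
      (h₄ : b - 1 = b₂) : dAlt w n n n a b = D a b - x * (D a₁ b + D a₂ b₁ + D a b₂)
        + x ^ 2 * (D a b₁ + D a₁ b₂ + D a₂ b) - x ^ 3 * D a b := by
    have h := dAlt_pred hw0 hw (n + 1 : ℕ) a b
    rw [zpow_natCast, show ((n + 1 : ℕ) : ℤ) - 1 = n by push_cast; ring] at h
    rw [hD, hx, ← h₁, ← h₂, ← h₃, ← h₄]
    exact h
  cases p <;> simp only [dSeq, cwRhs, Profile.weight, ← hx] <;>
    simp only [show ∀ a b, dAlt w (n + 1 : ℕ) (n + 1 : ℕ) (n + 1 : ℕ) a b = D a b from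
      fun a b => by rw [hD]]
  · linear_combination -pred 1 1 2 0 2 0 rfl rfl rfl rfl + x * wall 2 + x * rot 1 0 7 rfl +
      x * wall 7 + x ^ 2 * rot 1 7 0 rfl + x ^ 2 * rot 7 0 1 rfl + x ^ 2 * wall 1 -
      x ^ 2 * rot 2 0 6 rfl - x ^ 2 * wall 6 - x ^ 3 * rot 1 6 1 rfl - x ^ 3 * rot 6 1 1 rfl -
      x ^ 2 * wall 1
  · linear_combination -pred 2 1 3 1 2 0 rfl rfl rfl rfl + x * rot 2 0 6 rfl + x * wall 6 +
      x ^ 2 * rot 1 6 1 rfl + x ^ 2 * rot 6 1 1 rfl - x ^ 2 * rot 3 0 5 rfl - x ^ 2 * wall 5 -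
      x ^ 3 * rot 1 5 2 rfl - x ^ 3 * rot 5 2 1 rfl
  · linear_combination -pred 1 2 2 0 3 1 rfl rfl rfl rfl + x * wall 3 - x ^ 2 * wall 2
  · linear_combination -pred 3 1 4 2 2 0 rfl rfl rfl rfl + x * rot 4 1 3 rfl + x * rot 3 0 5 rfl
      + x * wall 5 + x ^ 2 * rot 1 5 2 rfl + x ^ 2 * rot 5 2 1 rfl - x ^ 2 * rot 4 0 4 rfl -
      x ^ 2 * wall 4 - x ^ 3 * rot 1 4 3 rfl - x ^ 3 * rot 4 3 1 rfl
  · linear_combination -pred 1 3 2 0 4 2 rfl rfl rfl rfl + x * rot 2 3 3 rfl + x * rot 3 3 2 rfl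
      + x * wall 4 + x ^ 2 * rot 1 4 3 rfl + x ^ 2 * rot 4 3 1 rfl - x ^ 2 * rot 1 4 3 rfl -
      x ^ 2 * rot 4 3 1 rfl - x ^ 2 * wall 3
  · linear_combination -pred 2 2 3 1 3 1 rfl rfl rfl rfl - x ^ 2 * rot 2 3 3 rfl -
      x ^ 2 * rot 3 3 2 rfl
  · linear_combination -pred 3 2 4 2 3 1 rfl rfl rfl rfl + x * rot 4 2 2 rfl + x * rot 2 3 3 rfl
      + x * rot 3 3 2 rfl - x ^ 2 * rot 3 3 2 rfl - x ^ 2 * rot 4 1 3 rfl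

end thetaProfiles

/-! ### Uniqueness of the solution -/

section uniqueness
open Profile
variable {R K : Type*} [CommRing R] [Field K] [Algebra R K]

lemma cwRhs_sub (x : K) (f g : Profile → K) (p : Profile) :
    cwRhs x (f - g) p = cwRhs x f p - cwRhs x g p := by
  cases p <;> simp only [cwRhs, Pi.sub_apply] <;> ring

lemma Profile.finite_range {α : Type*} (f : Profile → α) : (Set.range f).Finite := by
  classical
  refine ((Finset.finite_toSet ([p500, p410, p401, p320, p302, p311, p221].map f).toFinset)).subset ?_
  rintro _ ⟨p, rfl⟩
  cases p <;> simp

/-- The homogeneous system `f = cwRhs x f` has only the zero solution when `x` lies in the maximal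
ideal: every term of `cwRhs x f` is divisible by `x`, so the `R`-module generated by the values of `f`
vanishes by Nakayama's lemma. -/
lemma eq_zero_of_eq_cwRhs [IsLocalRing R] {x : R} (hx : x ∈ IsLocalRing.maximalIdeal R)
    {f : Profile → K} (hf : ∀ p, f p = cwRhs (algebraMap R K x) f p) : f = 0 := by
  set N : Submodule R K := Submodule.span R (Set.range f) with hN
  have hmem (p : Profile) : f p ∈ N := Submodule.subset_span ⟨p, rfl⟩
  have hbot : N = ⊥ := by
    refine Submodule.eq_bot_of_le_smul_of_le_jacobson_bot (IsLocalRing.maximalIdeal R) N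
      (Submodule.fg_span (Profile.finite_range f)) ?_ (IsLocalRing.maximalIdeal_le_jacobson _)
    rw [hN, Submodule.span_le]
    rintro _ ⟨p, rfl⟩
    have h : ∃ g ∈ N, f p = x • g := by
      rw [hf p]
      have e (y : R) (z : K) : algebraMap R K y * z = y • z := (Algebra.smul_def y z).symm
      cases p <;> simp only [cwRhs, Algebra.smul_def]
      · exact ⟨_, hmem p410, rfl⟩
      · exact ⟨f p320 + f p401 - x • f p311,
          sub_mem (add_mem (hmem _) (hmem _)) (N.smul_mem _ (hmem _)),
          by rw [Algebra.smul_def]; ring⟩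
      · exact ⟨f p311 + f p500 - x • f p410,
          sub_mem (add_mem (hmem _) (hmem _)) (N.smul_mem _ (hmem _)),
          by rw [Algebra.smul_def]; ring⟩
      · exact ⟨f p302 + f p311 - x • f p221,
          sub_mem (add_mem (hmem _) (hmem _)) (N.smul_mem _ (hmem _)),
          by rw [Algebra.smul_def]; ring⟩
      · exact ⟨f p221 + f p401 - x • f p311,
          sub_mem (add_mem (hmem _) (hmem _)) (N.smul_mem _ (hmem _)),
          by rw [Algebra.smul_def]; ring⟩
      · exact ⟨f p221 + f p302 + f p410 - x • (f p221 + f p320 + f p401) + x ^ 2 • f p311,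
          add_mem (sub_mem (add_mem (add_mem (hmem _) (hmem _)) (hmem _))
            (N.smul_mem _ (add_mem (add_mem (hmem _) (hmem _)) (hmem _))))
            (N.smul_mem _ (hmem _)),
          by rw [Algebra.smul_def, Algebra.smul_def, map_pow]; ring⟩
      · exact ⟨f p311 + f p221 + f p320 - x • (f p221 + f p302 + f p311) + x ^ 2 • f p221,
          add_mem (sub_mem (add_mem (add_mem (hmem _) (hmem _)) (hmem _))
            (N.smul_mem _ (add_mem (add_mem (hmem _) (hmem _)) (hmem _))))
            (N.smul_mem _ (hmem _)),
          by rw [Algebra.smul_def, Algebra.smul_def, map_pow]; ring⟩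
    obtain ⟨g, hg, hfg⟩ := h
    rw [SetLike.mem_coe, hfg]
    exact Submodule.smul_mem_smul hx hg
  funext p
  have := hmem p
  rwa [hbot, Submodule.mem_bot] at this

/-- The recurrence is implicit in the new terms, but by `eq_zero_of_eq_cwRhs` it determines them from the
old ones, so the two sequences coincide. -/
lemma aSeq_eq_dSeq [IsLocalRing R] {x : R} (hx : x ∈ IsLocalRing.maximalIdeal R)
    (hw0 : algebraMap R K x ≠ 0) (hw : ∀ k : ℕ, 1 - algebraMap R K x ^ (k + 1) ≠ 0) (n : ℕ) :
    aSeq (algebraMap R K x) n = dSeq (algebraMap R K x) n := by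
  induction n with
  | zero => funext p; rw [aSeq_zero, dSeq_zero]
  | succ n ih =>
    rw [← sub_eq_zero]
    refine eq_zero_of_eq_cwRhs (x := x ^ (n + 1)) (Ideal.pow_mem_of_mem _ hx _ n.succ_pos) fun p => ?_
    rw [map_pow, cwRhs_sub, ← aSeq_succ hw0 hw, ← dSeq_succ hw0 hw, ih, Pi.sub_apply]
    ring

end uniqueness

/-! ### Limits in the `X`-adic topology -/

section adic
open Filter

/-- `f` converges to `L` in the `X`-adic topology: for every `N`, all coefficients of `f n` of
degree below `N` eventually agree with those of `L`. -/
def AdicLim (f : ℕ → PowerSeries ℚ) (L : PowerSeries ℚ) : Prop :=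
  ∀ N : ℕ, ∀ᶠ n in atTop, (PowerSeries.X : PowerSeries ℚ) ^ N ∣ f n - L

/-- The family `F` tends to `0` in the `X`-adic topology along the cofinite filter, so that it is
summable. -/
def AdicSmall {ι : Type*} (F : ι → PowerSeries ℚ) : Prop :=
  ∀ N : ℕ, {i | ¬ (PowerSeries.X : PowerSeries ℚ) ^ N ∣ F i}.Finite

instance powerSeries_isTopologicalRing : IsTopologicalRing (PowerSeries ℚ) :=
  PowerSeries.WithPiTopology.instIsTopologicalRing ℚ

instance powerSeries_t2Space : T2Space (PowerSeries ℚ) :=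
  PowerSeries.WithPiTopology.instT2Space ℚ

lemma AdicLim.const (L : PowerSeries ℚ) : AdicLim (fun _ => L) L := fun N => by simp

lemma AdicLim.mul {f g : ℕ → PowerSeries ℚ} {L M : PowerSeries ℚ} (hf : AdicLim f L)
    (hg : AdicLim g M) : AdicLim (fun n => f n * g n) (L * M) := by
  intro N
  filter_upwards [hf N, hg N] with n h1 h2
  have h : f n * g n - L * M = (f n - L) * g n + L * (g n - M) := by ring
  rw [h]
  exact dvd_add (h1.mul_right _) (h2.mul_left _)

lemma AdicLim.sub {f g : ℕ → PowerSeries ℚ} {L M : PowerSeries ℚ} (hf : AdicLim f L)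
    (hg : AdicLim g M) : AdicLim (fun n => f n - g n) (L - M) := by
  intro N
  filter_upwards [hf N, hg N] with n h1 h2
  have h : f n - g n - (L - M) = (f n - L) - (g n - M) := by ring
  rw [h]
  exact dvd_sub h1 h2

lemma AdicLim.comp {f : ℕ → PowerSeries ℚ} {L : PowerSeries ℚ} (hf : AdicLim f L)
    {φ : ℕ → ℕ} (hφ : Tendsto φ atTop atTop) : AdicLim (fun n => f (φ n)) L :=
  fun N => hφ.eventually (hf N)

lemma eq_of_forall_X_pow_dvd {f g : PowerSeries ℚ}
    (h : ∀ N : ℕ, (PowerSeries.X : PowerSeries ℚ) ^ N ∣ f - g) : f = g := by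
  ext d
  have := PowerSeries.X_pow_dvd_iff.mp (h (d + 1)) d (by omega)
  rwa [map_sub, sub_eq_zero] at this

lemma AdicLim.unique {f : ℕ → PowerSeries ℚ} {L M : PowerSeries ℚ} (hL : AdicLim f L)
    (hM : AdicLim f M) : L = M := by
  refine eq_of_forall_X_pow_dvd fun N => ?_
  obtain ⟨n, h1, h2⟩ := ((hL N).and (hM N)).exists
  have h : L - M = (f n - M) - (f n - L) := by ring
  rw [h]
  exact dvd_sub h2 h1

lemma AdicLim.tendsto {f : ℕ → PowerSeries ℚ} {L : PowerSeries ℚ} (hf : AdicLim f L) :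
    Tendsto f atTop (nhds L) := by
  refine (PowerSeries.WithPiTopology.tendsto_iff_coeff_tendsto (R := ℚ) f atTop L).mpr fun d => ?_
  refine tendsto_nhds_of_eventually_eq ?_
  filter_upwards [hf (d + 1)] with n hn
  have := PowerSeries.X_pow_dvd_iff.mp hn d (by omega)
  rwa [map_sub, sub_eq_zero] at this

lemma AdicSmall.summable {ι : Type*} {F : ι → PowerSeries ℚ} (hF : AdicSmall F) : Summable F := by
  refine (PowerSeries.WithPiTopology.summable_iff_summable_coeff (R := ℚ)).mpr fun d => ?_
  refine summable_of_hasFiniteSupport ((hF (d + 1)).subset fun i hi => ?_)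
  intro hdvd
  exact hi (PowerSeries.X_pow_dvd_iff.mp hdvd d (by omega))

/-- The error of a partial sum containing all terms not divisible by `X ^ N`. -/
lemma AdicSmall.dvd_sub {ι : Type*} {F : ι → PowerSeries ℚ} {S : PowerSeries ℚ} (hS : HasSum F S)
    {N : ℕ} {s : Finset ι} (hs : ∀ i ∉ s, (PowerSeries.X : PowerSeries ℚ) ^ N ∣ F i) :
    (PowerSeries.X : PowerSeries ℚ) ^ N ∣ ∑ i ∈ s, F i - S := by
  rw [PowerSeries.X_pow_dvd_iff]
  intro d hd
  have h1 := (PowerSeries.WithPiTopology.hasSum_iff_hasSum_coeff (R := ℚ)).mp hS d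
  have h2 : HasSum (fun i => PowerSeries.coeff d (F i)) (∑ i ∈ s, PowerSeries.coeff d (F i)) :=
    hasSum_sum_of_ne_finset_zero fun i hi => PowerSeries.X_pow_dvd_iff.mp (hs i hi) d hd
  rw [map_sub, map_sum, h2.unique h1, sub_self]

/-- The `X`-adic form of Tannery's theorem: if the weights `c n i` have finite support for each `n` and
tend to `C` for each `i`, then the weighted sums tend to `C` times the full sum. -/
lemma AdicSmall.adicLim_finsum {ι : Type*} {F : ι → PowerSeries ℚ} (hF : AdicSmall F)
    {S C : PowerSeries ℚ} (hS : HasSum F S) {c : ℕ → ι → PowerSeries ℚ}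
    (hfin : ∀ n, (c n).HasFiniteSupport) (hc : ∀ i, AdicLim (fun n => c n i) C) :
    AdicLim (fun n => ∑ᶠ i, F i * c n i) (S * C) := by
  classical
  intro N
  set s := (hF N).toFinset with hs
  have hs' : ∀ i ∉ s, (PowerSeries.X : PowerSeries ℚ) ^ N ∣ F i := fun i hi => by
    by_contra h
    exact hi (by simpa [hs] using h)
  have hev : ∀ᶠ n in atTop, ∀ i ∈ s, (PowerSeries.X : PowerSeries ℚ) ^ N ∣ c n i - C :=
    (Filter.eventually_all_finset s).mpr fun i _ => hc i N
  filter_upwards [hev] with n hn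
  have hsub : (Function.support fun i => F i * c n i) ⊆ ((hfin n).toFinset ∪ s : Finset ι) := by
    intro i hi
    rw [Finset.coe_union, Set.mem_union]
    exact Or.inl ((Set.Finite.mem_toFinset _).mpr (right_ne_zero_of_mul hi))
  rw [finsum_eq_sum_of_support_subset _ hsub]
  set t := (hfin n).toFinset ∪ s
  have h1 : (PowerSeries.X : PowerSeries ℚ) ^ N ∣ ∑ i ∈ t, (F i * c n i - F i * C) := by
    refine Finset.dvd_sum fun i _ => ?_
    rw [← mul_sub]
    by_cases hi : i ∈ s
    · exact (hn i hi).mul_left _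
    · exact (hs' i hi).mul_right _
  have h2 : (PowerSeries.X : PowerSeries ℚ) ^ N ∣ ∑ i ∈ t, F i - S :=
    AdicSmall.dvd_sub hS fun i hi => hs' i fun h => hi (Finset.mem_union_right _ h)
  have h : ∑ i ∈ t, F i * c n i - S * C
      = ∑ i ∈ t, (F i * c n i - F i * C) + (∑ i ∈ t, F i - S) * C := by
    rw [Finset.sum_sub_distrib, ← Finset.sum_mul]
    ring
  rw [h]
  exact dvd_add h1 (h2.mul_right _)

end adic

/-! ### The multisum as a power series -/

section transfer
open Filter Profile

local notation "ι" => algebraMap (PowerSeries ℚ) (FractionRing (PowerSeries ℚ))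

/-- The variable `q` in the field of fractions of `ℚ⟦q⟧`, at which the identities above are used. -/
noncomputable def qFrac : FractionRing (PowerSeries ℚ) := ι q

lemma qFrac_injective : Function.Injective ι := IsFractionRing.injective _ _

lemma qFrac_ne_zero : qFrac ≠ 0 := by
  rw [qFrac, Ne, map_eq_zero_iff _ qFrac_injective]
  exact PowerSeries.X_ne_zero

lemma constantCoeff_qPoch (n : ℕ) : PowerSeries.constantCoeff (qPoch n) = 1 := by
  simp [qPoch, q, map_prod]

lemma qPoch_mul_inv (n : ℕ) : qPoch n * (qPoch n)⁻¹ = 1 :=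
  PowerSeries.mul_inv_cancel _ (by rw [constantCoeff_qPoch]; exact one_ne_zero)

lemma one_sub_qFrac_pow_ne_zero (k : ℕ) : 1 - qFrac ^ (k + 1) ≠ 0 := by
  rw [qFrac, ← map_pow, ← map_one ι, ← map_sub, Ne, map_eq_zero_iff _ qFrac_injective]
  intro h
  have := congrArg PowerSeries.constantCoeff h
  simp [q] at this

lemma map_qPoch (n : ℕ) : ι (qPoch n) = fPoch qFrac n := by
  simp [qPoch, fPoch, qFrac, map_prod]

lemma map_qPoch_inv (n : ℕ) : ι (qPoch n)⁻¹ = (fPoch qFrac n)⁻¹ := by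
  refine eq_inv_of_mul_eq_one_left ?_
  rw [← map_qPoch, ← map_mul, mul_comm, qPoch_mul_inv, map_one]

lemma map_qBinom (m k : ℕ) : ι (qBinom m k) = fBinom qFrac m k := by
  rw [qBinom, fBinom]
  split_ifs with h
  · rw [PowerSeries.mul_inv_rev, map_mul, map_mul, map_qPoch_inv, map_qPoch_inv, map_qPoch,
      div_eq_mul_inv, mul_inv_rev]
  · rw [map_zero]

/-- The summand of the theorem without the factor `1 + q^(n₁ + n₂ + n₄ + 1)`. -/
noncomputable def quadTerm (n₁ n₂ n₃ n₄ : ℕ) : PowerSeries ℚ :=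
  q ^ (n₁ ^ 2 + n₂ ^ 2 + n₃ ^ 2 + n₄ ^ 2 + (n₁ + n₃) + n₂ * n₄ - n₁ * n₂)
    * (qPoch n₁)⁻¹ * qBinom n₁ n₂ * qBinom n₁ n₄ * qBinom n₂ n₃

/-- The image in the fraction field, with an integer exponent: the truncated subtraction in the exponent of
`quadTerm` is harmless, as `n₁ n₂ ≤ n₁² + n₂²`. -/
lemma map_quadTerm (n₁ n₂ n₃ n₄ : ℕ) : ι (quadTerm n₁ n₂ n₃ n₄) =
    qFrac ^ ((n₁ : ℤ) ^ 2 + n₂ ^ 2 + n₃ ^ 2 + n₄ ^ 2 + (n₁ + n₃) + n₂ * n₄ - n₁ * n₂)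
      * (fPoch qFrac n₁)⁻¹ * fBinom qFrac n₁ n₂ * fBinom qFrac n₁ n₄ * fBinom qFrac n₂ n₃ := by
  have hle : n₁ * n₂ ≤ n₁ ^ 2 + n₂ ^ 2 + n₃ ^ 2 + n₄ ^ 2 + (n₁ + n₃) + n₂ * n₄ := by
    rcases le_total n₁ n₂ with h | h <;> nlinarith
  rw [quadTerm, map_mul, map_mul, map_mul, map_mul, map_pow, map_qPoch_inv, map_qBinom, map_qBinom,
    map_qBinom, ← qFrac, ← zpow_natCast, Nat.cast_sub hle]
  push_cast
  rfl

/-- The part with `n₁ = m` of the multisum, without the factor `1 + q^(n₁ + n₂ + n₄ + 1)`. -/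
noncomputable def partA (m : ℕ) : PowerSeries ℚ :=
  ∑ n₂ ∈ Finset.range (m + 1), ∑ n₃ ∈ Finset.range (n₂ + 1), ∑ n₄ ∈ Finset.range (m + 1),
    quadTerm m n₂ n₃ n₄

/-- The part with `n₁ = m` of the multisum, with `q^(n₁ + n₂ + n₄ + 1)` in place of that factor. -/
noncomputable def partB (m : ℕ) : PowerSeries ℚ :=
  ∑ n₂ ∈ Finset.range (m + 1), ∑ n₃ ∈ Finset.range (n₂ + 1), ∑ n₄ ∈ Finset.range (m + 1),
    q ^ (m + n₂ + n₄ + 1) * quadTerm m n₂ n₃ n₄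

lemma map_partA (m : ℕ) :
    ι (partA m) = qFrac ^ m * PowerSeries.coeff m (cwGen qFrac 0 1 0) := by
  have hq := qFrac_ne_zero
  rw [coeff_cwGen, cwNum, tripleSum, partA]
  simp only [map_sum, innerSum, Finset.mul_sum, Finset.sum_mul, Finset.sum_div, map_quadTerm]
  refine Finset.sum_congr rfl fun n₂ _ => ?_
  rw [Finset.sum_comm]
  refine Finset.sum_congr rfl fun n₄ _ => Finset.sum_congr rfl fun n₃ _ => ?_
  have e : qFrac ^ ((m : ℤ) ^ 2 + n₂ ^ 2 + n₃ ^ 2 + n₄ ^ 2 + (m + n₃) + n₂ * n₄ - m * n₂)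
      = qFrac ^ m * qFrac ^ (m ^ 2) * qFrac ^ ((n₂ : ℤ) ^ 2 + (0 - m) * n₂)
        * qFrac ^ ((n₃ : ℤ) ^ 2 + 1 * n₃) * qFrac ^ ((n₄ : ℤ) ^ 2 + (0 + n₂) * n₄) := by
    simp only [← zpow_natCast, ← zpow_add₀ hq]
    congr 1
    push_cast
    ring
  rw [e, div_eq_mul_inv]
  ring

lemma map_partB (m : ℕ) :
    ι (partB m) = qFrac ^ (2 * m + 1) * PowerSeries.coeff m (cwGen qFrac 1 1 1) := by
  have hq := qFrac_ne_zero
  rw [coeff_cwGen, cwNum, tripleSum, partB]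
  simp only [map_sum, map_mul, map_pow, ← qFrac.eq_def, innerSum, Finset.mul_sum, Finset.sum_mul,
    Finset.sum_div, map_quadTerm]
  refine Finset.sum_congr rfl fun n₂ _ => ?_
  rw [Finset.sum_comm]
  refine Finset.sum_congr rfl fun n₄ _ => Finset.sum_congr rfl fun n₃ _ => ?_
  have e : qFrac ^ (m + n₂ + n₄ + 1)
        * qFrac ^ ((m : ℤ) ^ 2 + n₂ ^ 2 + n₃ ^ 2 + n₄ ^ 2 + (m + n₃) + n₂ * n₄ - m * n₂)
      = qFrac ^ (2 * m + 1) * qFrac ^ (m ^ 2) * qFrac ^ ((n₂ : ℤ) ^ 2 + (1 - m) * n₂)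
        * qFrac ^ ((n₃ : ℤ) ^ 2 + 1 * n₃) * qFrac ^ ((n₄ : ℤ) ^ 2 + (1 + n₂) * n₄) := by
    simp only [← zpow_natCast, ← zpow_add₀ hq]
    congr 1
    push_cast
    ring
  rw [div_eq_mul_inv]
  linear_combination ((fPoch qFrac m)⁻¹ * fBinom qFrac m n₂ * fBinom qFrac m n₄
    * fBinom qFrac n₂ n₃) * e

/-- The coefficient of `z ^ m` in the numerator `G_{(4,0,1)}(z)`; the sum of all of them, that is
`G_{(4,0,1)}(1)`, is the multisum of the theorem. -/
noncomputable def genCoeff (m : ℕ) : PowerSeries ℚ :=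
  partA m + if m = 0 then 0 else partB (m - 1)

lemma map_genCoeff (m : ℕ) : ι (genCoeff m) = PowerSeries.coeff m (profileGen qFrac p401) := by
  rw [genCoeff, profileGen, map_add, map_add, map_partA, PowerSeries.coeff_rescale]
  congr 1
  rcases m with _ | m
  · rw [coeff_zw_zero, if_pos rfl, map_zero]
  · rw [coeff_zw_succ, if_neg (by omega), Nat.add_sub_cancel, map_partB, PowerSeries.coeff_rescale,
      PowerSeries.coeff_rescale]
    ring

/-- The coefficient of `z ^ n` in `z ^ m / (z;q)_∞`. -/
noncomputable def weightA (n m : ℕ) : PowerSeries ℚ := if m ≤ n then (qPoch (n - m))⁻¹ else 0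

lemma finite_support_weightA (n : ℕ) : (weightA n).HasFiniteSupport := by
  refine (Set.finite_Iic n).subset fun m hm => ?_
  by_contra h
  exact hm (if_neg h)

lemma map_finsum_weightA (n : ℕ) :
    ι (∑ᶠ m, genCoeff m * weightA n m) = aSeq qFrac n p401 := by
  have hsub : (Function.support fun m => genCoeff m * weightA n m) ⊆ (Finset.range (n + 1)) := by
    intro m hm
    by_contra h
    refine hm ?_
    simp only [Finset.coe_range, Set.mem_Iio] at h
    change _ * weightA n m = 0
    rw [weightA, if_neg (by omega), mul_zero]
  rw [finsum_eq_sum_of_support_subset _ hsub, map_sum, aSeq, PowerSeries.coeff_mul,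
    Finset.Nat.sum_antidiagonal_eq_sum_range_succ_mk]
  refine Finset.sum_congr rfl fun m hm => ?_
  rw [Finset.mem_range] at hm
  rw [map_mul, map_genCoeff, weightA, if_pos (by omega), map_qPoch_inv, expGen,
    PowerSeries.coeff_mk]

end transfer

/-! ### The theta sum as a power series -/

section thetaTransfer
open Filter Profile

local notation "ι" => algebraMap (PowerSeries ℚ) (FractionRing (PowerSeries ℚ))

/-- The analogue of `rInv` in `ℚ⟦q⟧`. -/
noncomputable def rPoch (k : ℤ) : PowerSeries ℚ := if 0 ≤ k then (qPoch k.toNat)⁻¹ else 0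

lemma map_rPoch (k : ℤ) : ι (rPoch k) = rInv qFrac k := by
  rw [rPoch, rInv]
  split_ifs
  · rw [map_qPoch_inv]
  · rw [map_zero]

/-- The exponent of `dTerm` for the weight `(1, 2)` of profile `(4,0,1)`. -/
def thetaExp (e : ℤ) (p : ℤ × ℤ) : ℤ :=
  8 * quadForm e p + 1 * rootX e p + 2 * (rootX e p + p.2)

/-- With `j = y + u` and `n = -y - 3 u` the exponent is the pentagonal number of index `2 j` plus four
times the triangular number of `n`. -/
lemma thetaExp_zero (p : ℤ × ℤ) : thetaExp 0 p = (p.2 + p.1) * (6 * (p.2 + p.1) - 1)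
    + 2 * ((-p.2 - 3 * p.1) * (-p.2 - 3 * p.1 + 1)) := by
  simp only [thetaExp, quadForm, rootX]
  ring

/-- With `j = -1 - y - u` and `n = y + 3 u + 1` the exponent is the pentagonal number of index `2 j + 1`
plus four times the triangular number of `n`. -/
lemma thetaExp_one (p : ℤ × ℤ) : thetaExp 1 p
    = (2 * (-1 - p.2 - p.1) + 1) * (3 * (-1 - p.2 - p.1) + 1)
    + 2 * ((p.2 + 3 * p.1 + 1) * (p.2 + 3 * p.1 + 1 + 1)) := by
  simp only [thetaExp, quadForm, rootX]
  ring

lemma thetaExp_nonneg {e : ℤ} (he : e = 0 ∨ e = 1) (p : ℤ × ℤ) : 0 ≤ thetaExp e p := by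
  have h1 (n : ℤ) : 0 ≤ n * (n + 1) := by
    rcases le_or_gt 0 n with h | h
    · positivity
    · exact mul_nonneg_of_nonpos_of_nonpos h.le (by omega)
  rcases he with rfl | rfl
  · rw [thetaExp_zero]
    have := h1 (-p.2 - 3 * p.1)
    have := h1 (p.2 + p.1 - 1)
    nlinarith
  · rw [thetaExp_one]
    have := h1 (p.2 + 3 * p.1 + 1)
    have := h1 (-1 - p.2 - p.1)
    nlinarith

/-- The power of `q` in the theta summand; the exponent is nonnegative by `thetaExp_nonneg`. -/
noncomputable def thetaTerm (e : ℤ) (p : ℤ × ℤ) : PowerSeries ℚ := q ^ (thetaExp e p).toNat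

/-- The Pochhammer factors of the theta summand at level `n`. -/
noncomputable def weightD (e : ℤ) (n : ℕ) (p : ℤ × ℤ) : PowerSeries ℚ :=
  rPoch (n + rootX e p) * rPoch (n + p.2) * rPoch (n - rootX e p - p.2)

lemma map_thetaTerm_weightD {e : ℤ} (he : e = 0 ∨ e = 1) (n : ℕ) (p : ℤ × ℤ) :
    ι (thetaTerm e p * weightD e n p) = dTerm qFrac e n n n 1 2 p := by
  have h : (((thetaExp e p).toNat : ℕ) : ℤ) = thetaExp e p := Int.toNat_of_nonneg (thetaExp_nonneg he p)
  rw [map_mul, thetaTerm, map_pow, ← qFrac, weightD, map_mul, map_mul, map_rPoch, map_rPoch,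
    map_rPoch, ← zpow_natCast, h, dTerm, thetaExp]

lemma finite_support_weightD (e : ℤ) (n : ℕ) : (weightD e n).HasFiniteSupport := by
  refine (finite_support_dTerm qFrac e n n n 1 2).subset fun p hp h => hp ?_
  rw [dTerm, mul_eq_zero, or_iff_right (zpow_ne_zero _ qFrac_ne_zero), ← map_rPoch, ← map_rPoch,
    ← map_rPoch, ← map_mul, ← map_mul, map_eq_zero_iff _ qFrac_injective] at h
  exact h

lemma map_finsum_weightD {e : ℤ} (he : e = 0 ∨ e = 1) (n : ℕ) :
    ι (∑ᶠ p, thetaTerm e p * weightD e n p) = dSum qFrac e n n n 1 2 := by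
  have hfin : (Function.support fun p => thetaTerm e p * weightD e n p).Finite :=
    (finite_support_weightD e n).subset fun p hp => right_ne_zero_of_mul hp
  rw [dSum, map_finsum (algebraMap (PowerSeries ℚ) (FractionRing (PowerSeries ℚ))) hfin]
  exact finsum_congr fun p => map_thetaTerm_weightD he n p

lemma X_mem_maximalIdeal :
    (q : PowerSeries ℚ) ∈ IsLocalRing.maximalIdeal (PowerSeries ℚ) := by
  rw [IsLocalRing.mem_maximalIdeal, mem_nonunits_iff, q]
  exact PowerSeries.X_prime.not_isUnit

/-- The finite form of the identity: `aSeq_eq_dSeq` for profile `(4,0,1)`, transferred to `ℚ⟦q⟧`. -/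
lemma finsum_weightA_eq (n : ℕ) : ∑ᶠ m, genCoeff m * weightA n m
    = ∑ᶠ p, thetaTerm 0 p * weightD 0 n p - ∑ᶠ p, thetaTerm 1 p * weightD 1 n p := by
  apply qFrac_injective
  rw [map_finsum_weightA, map_sub, map_finsum_weightD (Or.inl rfl), map_finsum_weightD (Or.inr rfl),
    qFrac, aSeq_eq_dSeq X_mem_maximalIdeal qFrac_ne_zero one_sub_qFrac_pow_ne_zero]
  rfl

end thetaTransfer

section limits
open Filter

/-- The infinite product `(q;q)_∞`, given as Euler's pentagonal number series. -/
noncomputable def euler : PowerSeries ℚ := PowerSeries.pentagonalSeries ℚ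

lemma adicLim_qPoch : AdicLim qPoch euler := by
  intro N
  have h : ∀ᶠ n in atTop, ∀ d ∈ Finset.range N,
      PowerSeries.coeff d (qPoch n) = PowerSeries.coeff d euler :=
    (Filter.eventually_all_finset _).mpr fun d _ => tendsto_finset_range.eventually
      (PowerSeries.coeff_prod_one_sub_X_pow_eventually_eq ℚ d)
  filter_upwards [h] with n hn
  rw [PowerSeries.X_pow_dvd_iff]
  intro d hd
  rw [map_sub, hn d (Finset.mem_range.mpr hd), sub_self]

lemma constantCoeff_euler : PowerSeries.constantCoeff euler = 1 := by
  obtain ⟨n, hn⟩ := (adicLim_qPoch 1).exists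
  have := PowerSeries.X_pow_dvd_iff.mp hn 0 one_pos
  rw [map_sub, PowerSeries.coeff_zero_eq_constantCoeff_apply,
    PowerSeries.coeff_zero_eq_constantCoeff_apply, constantCoeff_qPoch] at this
  linarith

lemma euler_mul_inv : euler * euler⁻¹ = 1 :=
  PowerSeries.mul_inv_cancel _ (by rw [constantCoeff_euler]; exact one_ne_zero)

lemma adicLim_qPoch_inv : AdicLim (fun n => (qPoch n)⁻¹) euler⁻¹ := by
  intro N
  filter_upwards [adicLim_qPoch N] with n hn
  have h : (qPoch n)⁻¹ - euler⁻¹ = (qPoch n - euler) * (-((qPoch n)⁻¹ * euler⁻¹)) := by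
    linear_combination euler⁻¹ * qPoch_mul_inv n - (qPoch n)⁻¹ * euler_mul_inv
  rw [h]
  exact hn.mul_right _

lemma AdicLim.congr {f g : ℕ → PowerSeries ℚ} {L : PowerSeries ℚ} (hf : AdicLim f L)
    (h : f =ᶠ[atTop] g) : AdicLim g L := fun N => by
  filter_upwards [hf N, h] with n hn he
  rwa [← he]

lemma adicLim_weightA (m : ℕ) : AdicLim (fun n => weightA n m) euler⁻¹ := by
  refine (adicLim_qPoch_inv.comp (φ := fun n => n - m) (tendsto_sub_atTop_nat m)).congr ?_
  filter_upwards [eventually_ge_atTop m] with n hn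
  rw [weightA, if_pos hn]

lemma adicLim_rPoch (c : ℤ) : AdicLim (fun n => rPoch (n + c)) euler⁻¹ := by
  have ht : Tendsto (fun n : ℕ => ((n : ℤ) + c).toNat) atTop atTop :=
    tendsto_atTop.mpr fun b => by
      filter_upwards [eventually_ge_atTop (b + c.natAbs)] with n hn
      omega
  refine (adicLim_qPoch_inv.comp ht).congr ?_
  filter_upwards [eventually_ge_atTop c.natAbs] with n hn
  rw [rPoch, if_pos (by omega)]

lemma adicLim_weightD (e : ℤ) (p : ℤ × ℤ) :
    AdicLim (fun n => weightD e n p) (euler⁻¹ * euler⁻¹ * euler⁻¹) := by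
  refine ((adicLim_rPoch _).mul (adicLim_rPoch _)).mul ?_
  have := adicLim_rPoch (-rootX e p - p.2)
  simpa only [← sub_eq_add_neg, add_sub] using this

end limits

/-! ### Factorization of the theta sum -/

section thetaProduct
open Filter Profile

lemma AdicSmall.comp_injective {α β : Type*} {F : β → PowerSeries ℚ} (hF : AdicSmall F)
    {φ : α → β} (hφ : φ.Injective) : AdicSmall (F ∘ φ) :=
  fun N => (hF N).preimage hφ.injOn

lemma AdicSmall.mul {α β : Type*} {F : α → PowerSeries ℚ} {G : β → PowerSeries ℚ}
    (hF : AdicSmall F) (hG : AdicSmall G) : AdicSmall fun p : α × β => F p.1 * G p.2 :=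
  fun N => ((hF N).prod (hG N)).subset fun _ hp =>
    ⟨fun h => hp (h.mul_right _), fun h => hp (h.mul_left _)⟩

/-- The term of Euler's pentagonal number series at the integer `k`. -/
noncomputable def pentTerm (k : ℤ) : PowerSeries ℚ :=
  (Int.negOnePow k : PowerSeries ℚ) * q ^ pentagonal k

lemma hasSum_pentTerm : HasSum pentTerm euler :=
  PowerSeries.WithPiTopology.hasSum_pentagonalSeries ℚ

lemma pentTerm_small : AdicSmall pentTerm := by
  intro N
  refine ((Set.finite_Iio N).preimage pentagonal_injective.injOn).subset fun k hk => ?_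
  by_contra h
  simp only [Set.mem_preimage, Set.mem_Iio, not_lt] at h
  exact hk ((pow_dvd_pow _ h).mul_left _)

/-- The term `q^(2 N (N + 1))` of `ψ(q⁴)`. -/
noncomputable def psiTerm (N : ℕ) : PowerSeries ℚ := q ^ (2 * (N * (N + 1)))

lemma psiTerm_small : AdicSmall psiTerm := by
  intro N
  refine (Set.finite_Iio N).subset fun k hk => ?_
  by_contra h
  simp only [Set.mem_Iio, not_lt] at h
  exact hk (pow_dvd_pow _ (by nlinarith))

/-- Gauss's series `ψ(q⁴) = ∑_{N ≥ 0} q^(2 N (N + 1))`. -/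
noncomputable def psiSum : PowerSeries ℚ := ∑' N, psiTerm N

lemma hasSum_psiTerm : HasSum psiTerm psiSum := psiTerm_small.summable.hasSum

/-- The map `ℤ → ℕ` identifying `n` with `-1 - n`, which preserves `n (n + 1)`. Each fibre consists of
two integers of opposite parity. -/
def foldInt (n : ℤ) : ℕ := if 0 ≤ n then n.toNat else (-1 - n).toNat

lemma foldInt_mul (n : ℤ) : (foldInt n : ℤ) * (foldInt n + 1) = n * (n + 1) := by
  rw [foldInt]
  split_ifs with h
  · rw [Int.toNat_of_nonneg h]
  · rw [Int.toNat_of_nonneg (by omega)]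
    ring

/-- The reindexing of the two cosets by a pentagonal index and an index of `ψ(q⁴)`. The coset `e = 0` gives
the even pentagonal indices and the coset `e = 1` the odd ones. -/
def thetaIndex : (ℤ × ℤ) ⊕ (ℤ × ℤ) → ℤ × ℕ
  | Sum.inl p => (2 * (p.2 + p.1), foldInt (-p.2 - 3 * p.1))
  | Sum.inr p => (2 * (-1 - p.2 - p.1) + 1, foldInt (p.2 + 3 * p.1 + 1))

/-- The parity condition linking the two coordinates of a lattice point selects exactly one of the two
integers in each fibre of `foldInt`. -/
lemma thetaIndex_bijective : Function.Bijective thetaIndex := by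
  constructor
  · rintro (⟨u, y⟩ | ⟨u, y⟩) (⟨u', y'⟩ | ⟨u', y'⟩) h <;>
      simp only [thetaIndex, Prod.mk.injEq, foldInt] at h <;>
      obtain ⟨h1, h2⟩ := h
    · have : u = u' ∧ y = y' := by split_ifs at h2 <;> omega
      rw [this.1, this.2]
    · omega
    · omega
    · have : u = u' ∧ y = y' := by split_ifs at h2 <;> omega
      rw [this.1, this.2]
  · rintro ⟨j, N⟩
    obtain ⟨k, hk⟩ : ∃ k, j = 2 * k ∨ j = 2 * k + 1 := ⟨j / 2, by omega⟩
    obtain ⟨n, m, hn, hm⟩ : ∃ n m : ℤ, foldInt n = N ∧ n + k = 2 * m := by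
      rcases Int.emod_two_eq_zero_or_one (N + k) with h | h
      · refine ⟨N, (N + k) / 2, ?_, by omega⟩
        rw [foldInt, if_pos (by omega), Int.toNat_natCast]
      · refine ⟨-1 - N, (-1 - N + k) / 2, ?_, by omega⟩
        rw [foldInt, if_neg (by omega)]
        omega
    rcases hk with rfl | rfl
    · refine ⟨Sum.inl (-m, k + m), ?_⟩
      simp only [thetaIndex]
      rw [show -(k + m) - 3 * -m = n by omega, hn, show k + m + -m = k by omega]
    · refine ⟨Sum.inr (m, -1 - k - m), ?_⟩
      simp only [thetaIndex]
      rw [show -1 - k - m + 3 * m + 1 = n by omega, hn, show -1 - (-1 - k - m) - m = k by omega]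

lemma thetaTerm_zero_eq (p : ℤ × ℤ) :
    pentTerm (thetaIndex (Sum.inl p)).1 * psiTerm (thetaIndex (Sum.inl p)).2 = thetaTerm 0 p := by
  have h1 := two_mul_natCast_pentagonal (2 * (p.2 + p.1))
  have h2 := foldInt_mul (-p.2 - 3 * p.1)
  simp only [thetaIndex, pentTerm, psiTerm, thetaTerm]
  rw [Int.negOnePow_two_mul, Units.val_one, Int.cast_one, one_mul, ← pow_add]
  congr 1
  zify
  rw [Int.toNat_of_nonneg (thetaExp_nonneg (Or.inl rfl) p), thetaExp_zero, h2]
  linarith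

lemma thetaTerm_one_eq (p : ℤ × ℤ) :
    pentTerm (thetaIndex (Sum.inr p)).1 * psiTerm (thetaIndex (Sum.inr p)).2
      = -thetaTerm 1 p := by
  have h1 := two_mul_natCast_pentagonal (2 * (-1 - p.2 - p.1) + 1)
  have h2 := foldInt_mul (p.2 + 3 * p.1 + 1)
  simp only [thetaIndex, pentTerm, psiTerm, thetaTerm]
  rw [Int.negOnePow_two_mul_add_one, Units.val_neg, Units.val_one, Int.cast_neg, Int.cast_one,
    neg_mul, neg_mul, one_mul, ← pow_add]
  congr 2
  zify
  rw [Int.toNat_of_nonneg (thetaExp_nonneg (Or.inr rfl) p), thetaExp_one, h2]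
  linarith

/-- The theta sum of profile `(4,0,1)` is the product `(q;q)_∞ ψ(q⁴)`. -/
lemma thetaTerm_hasSum : ∃ T₀ T₁ : PowerSeries ℚ, AdicSmall (thetaTerm 0) ∧ AdicSmall (thetaTerm 1) ∧
    HasSum (thetaTerm 0) T₀ ∧ HasSum (thetaTerm 1) T₁ ∧ T₀ - T₁ = euler * psiSum := by
  have hsmall := pentTerm_small.mul psiTerm_small
  have hprod := hasSum_pentTerm.mul hasSum_psiTerm hsmall.summable
  have hs0 : AdicSmall (thetaTerm 0) := by
    have h := hsmall.comp_injective (thetaIndex_bijective.1.comp Sum.inl_injective)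
    convert h using 1
    exact funext fun p => (thetaTerm_zero_eq p).symm
  have hs1 : AdicSmall (thetaTerm 1) := by
    have h := hsmall.comp_injective (thetaIndex_bijective.1.comp Sum.inr_injective)
    intro N
    refine (h N).subset fun p hp => ?_
    change ¬ _ ∣ pentTerm (thetaIndex (Sum.inr p)).1 * psiTerm (thetaIndex (Sum.inr p)).2
    rw [thetaTerm_one_eq, dvd_neg]
    exact hp
  refine ⟨_, _, hs0, hs1, hs0.summable.hasSum, hs1.summable.hasSum, ?_⟩
  have h0 : HasSum (fun p => pentTerm (thetaIndex (Sum.inl p)).1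
      * psiTerm (thetaIndex (Sum.inl p)).2) (∑' p, thetaTerm 0 p) := by
    simpa only [thetaTerm_zero_eq] using hs0.summable.hasSum
  have h1 : HasSum (fun p => pentTerm (thetaIndex (Sum.inr p)).1
      * psiTerm (thetaIndex (Sum.inr p)).2) (-∑' p, thetaTerm 1 p) := by
    simpa only [thetaTerm_one_eq] using hs1.summable.hasSum.neg
  have h : HasSum ((fun x : ℤ × ℕ => pentTerm x.1 * psiTerm x.2) ∘ Equiv.ofBijective _
      thetaIndex_bijective) (∑' p, thetaTerm 0 p + -∑' p, thetaTerm 1 p) := HasSum.sum h0 h1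
  rw [Equiv.hasSum_iff] at h
  rw [sub_eq_add_neg, h.unique hprod]

end thetaProduct

/-! ### Gauss's product formula -/

section gauss

/-- The product `∏_{k < s} (1 - r^(4k+2)) ∏_{s ≤ k < n} (1 - r^(4k+4))` in Shanks's identity. -/
def shanksTerm {L : Type*} [CommRing L] (r : L) (n s : ℕ) : L :=
  (∏ k ∈ Finset.range s, (1 - r ^ (4 * k + 2))) * ∏ k ∈ Finset.Ico s n, (1 - r ^ (4 * k + 4))

variable {L : Type*} [CommRing L] (r : L)

lemma shanksTerm_succ_left {n s : ℕ} (hs : s ≤ n) :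
    shanksTerm r (n + 1) s = shanksTerm r n s * (1 - r ^ (4 * n + 4)) := by
  rw [shanksTerm, shanksTerm, Finset.prod_Ico_succ_top hs, mul_assoc]

lemma shanksTerm_succ_right {n s : ℕ} (hs : s < n) :
    (1 - r ^ (4 * s + 4)) * shanksTerm r n (s + 1) = (1 - r ^ (4 * s + 2)) * shanksTerm r n s := by
  rw [shanksTerm, shanksTerm, Finset.prod_eq_prod_Ico_succ_bot hs, Finset.prod_range_succ]
  ring

/-- The telescoping sum behind the induction step of `shanks`. -/
lemma shanks_telescope (n m : ℕ) (hm : m ≤ n) :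
    ∑ s ∈ Finset.range (m + 1), shanksTerm r n s * r ^ (2 * s * (2 * n + 1))
        * ((1 - r ^ (4 * n + 4)) * r ^ (4 * s) - (1 - r ^ (4 * n + 2)))
      = r ^ (4 * n + 2) * (1 - r ^ (4 * m + 2)) * shanksTerm r n m
        * r ^ (2 * m * (2 * n + 1)) := by
  induction m with
  | zero => simp; ring
  | succ m ih =>
    rw [Finset.sum_range_succ, ih (by omega)]
    have h := shanksTerm_succ_right r (show m < n by omega)
    rw [show 2 * (m + 1) * (2 * n + 1) = 2 * m * (2 * n + 1) + (4 * n + 2) by ring]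
    linear_combination (-(r ^ (4 * n + 2)) * r ^ (2 * m * (2 * n + 1))) * h

/-- Shanks's finite form of Gauss's identity for `∑ q^(n(n+1)/2)`, with `r² = q`. For `n → ∞` only
the term `s = 0` survives on the left. -/
lemma shanks (n : ℕ) :
    ∑ s ∈ Finset.range (n + 1), shanksTerm r n s * r ^ (2 * s * (2 * n + 1))
      = (∏ k ∈ Finset.range n, (1 - r ^ (4 * k + 2)))
        * ∑ s ∈ Finset.range (2 * n + 1), r ^ (s * (s + 1)) := by
  induction n with
  | zero => simp [shanksTerm]
  | succ n ih =>
    have ht := shanks_telescope r n n le_rfl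
    have hnn : shanksTerm r n n = ∏ k ∈ Finset.range n, (1 - r ^ (4 * k + 2)) := by
      simp [shanksTerm]
    have hsucc : ∑ s ∈ Finset.range (n + 1), shanksTerm r (n + 1) s * r ^ (2 * s * (2 * (n + 1) + 1))
        = ∑ s ∈ Finset.range (n + 1), shanksTerm r n s * r ^ (2 * s * (2 * n + 1))
            * ((1 - r ^ (4 * n + 4)) * r ^ (4 * s) - (1 - r ^ (4 * n + 2)))
          + (1 - r ^ (4 * n + 2))
            * ∑ s ∈ Finset.range (n + 1), shanksTerm r n s * r ^ (2 * s * (2 * n + 1)) := by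
      rw [Finset.mul_sum, ← Finset.sum_add_distrib]
      refine Finset.sum_congr rfl fun s hs => ?_
      rw [shanksTerm_succ_left r (Finset.mem_range_succ_iff.mp hs)]
      ring
    have hnn' : shanksTerm r (n + 1) (n + 1)
        = (∏ k ∈ Finset.range n, (1 - r ^ (4 * k + 2))) * (1 - r ^ (4 * n + 2)) := by
      simp [shanksTerm, Finset.prod_range_succ]
    rw [Finset.sum_range_succ, hsucc, ht, ih, hnn', hnn, Finset.prod_range_succ,
      show 2 * (n + 1) + 1 = 2 * n + 1 + 1 + 1 by ring,
      Finset.sum_range_succ _ (2 * n + 1 + 1), Finset.sum_range_succ _ (2 * n + 1)]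
    ring

end gauss

section product
open Filter

/-- The `k`-th factor of the infinite product in the theorem. -/
noncomputable def prodFactor (k : ℕ) : PowerSeries ℚ :=
  (1 - q ^ (8*k+1)) * (1 - q ^ (8*k+2)) * (1 - q ^ (8*k+3)) * (1 - q ^ (8*k+4))^2
    * (1 - q ^ (8*k+5)) * (1 - q ^ (8*k+6)) * (1 - q ^ (8*k+7))

/-- The residues `1, …, 7` and one more copy of the residue `4` modulo `8` give `(q;q)_{8n}`, up to the
residues `8` and `4`. -/
lemma prod_prodFactor_mul (n : ℕ) :
    (∏ k ∈ Finset.range n, prodFactor k) * ∏ k ∈ Finset.range n, (1 - q ^ (8 * k + 8))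
      = qPoch (8 * n) * ∏ k ∈ Finset.range n, (1 - q ^ (8 * k + 4)) := by
  induction n with
  | zero => simp [qPoch]
  | succ n ih =>
    have h : qPoch (8 * (n + 1)) = qPoch (8 * n) * ((1 - q ^ (8*n+1)) * (1 - q ^ (8*n+2))
        * (1 - q ^ (8*n+3)) * (1 - q ^ (8*n+4)) * (1 - q ^ (8*n+5)) * (1 - q ^ (8*n+6))
        * (1 - q ^ (8*n+7)) * (1 - q ^ (8*n+8))) := by
      rw [qPoch, qPoch, show 8 * (n + 1) = 8 * n + 1 + 1 + 1 + 1 + 1 + 1 + 1 + 1 by ring]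
      simp only [Finset.prod_range_succ]
      ring
    rw [Finset.prod_range_succ, Finset.prod_range_succ, Finset.prod_range_succ, h, prodFactor]
    linear_combination ((1 - q ^ (8*n+1)) * (1 - q ^ (8*n+2)) * (1 - q ^ (8*n+3))
      * (1 - q ^ (8*n+4))^2 * (1 - q ^ (8*n+5)) * (1 - q ^ (8*n+6)) * (1 - q ^ (8*n+7))
      * (1 - q ^ (8*n+8))) * ih

/-- `ψ(q⁴) · ∏ prodFactor` agrees with `(q;q)_∞` to order `n`, by `shanks` at `r = q²`. -/
lemma psi_mul_prod_dvd (n : ℕ) : (PowerSeries.X : PowerSeries ℚ) ^ n ∣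
    (∑ s ∈ Finset.range (2 * n + 1), psiTerm s) * (∏ k ∈ Finset.range n, prodFactor k)
      - qPoch (8 * n) := by
  have h := shanks (q ^ 2) n
  simp only [← pow_mul] at h
  rw [Finset.sum_range_succ'] at h
  set O := ∏ k ∈ Finset.range n, (1 - q ^ (8 * k + 4)) with hO
  set E := ∏ k ∈ Finset.range n, (1 - q ^ (8 * k + 8)) with hE
  set Ψ := ∑ s ∈ Finset.range (2 * n + 1), psiTerm s with hΨ
  set δ := ∑ s ∈ Finset.range n, shanksTerm (q ^ 2) n (s + 1)
    * q ^ (2 * (2 * (s + 1) * (2 * n + 1))) with hδ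
  have h0 : shanksTerm (q ^ 2) n 0 = E := by
    rw [shanksTerm, Finset.range_zero, Finset.prod_empty, one_mul, hE, Finset.range_eq_Ico]
    exact Finset.prod_congr rfl fun k _ => by ring
  have hO' : ∏ k ∈ Finset.range n, (1 - q ^ (2 * (4 * k + 2))) = O :=
    Finset.prod_congr rfl fun k _ => by ring
  have hmain : δ + E = O * Ψ := by
    rw [h0, hO', mul_zero, zero_mul, mul_zero, pow_zero, mul_one] at h
    exact h
  have hdvd : (PowerSeries.X : PowerSeries ℚ) ^ n ∣ δ :=
    Finset.dvd_sum fun s _ => (pow_dvd_pow _ (by nlinarith)).mul_left _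
  have hEunit : IsUnit E := by
    rw [PowerSeries.isUnit_iff_constantCoeff, hE, map_prod]
    simp [q]
  have hW := prod_prodFactor_mul n
  rw [← hO, ← hE] at hW
  rw [← hEunit.dvd_mul_right]
  have e : (Ψ * (∏ k ∈ Finset.range n, prodFactor k) - qPoch (8 * n)) * E = qPoch (8 * n) * δ := by
    linear_combination Ψ * hW - qPoch (8 * n) * hmain
  rw [e]
  exact hdvd.mul_left _

lemma adicLim_psi : AdicLim (fun n => ∑ s ∈ Finset.range (2 * n + 1), psiTerm s) psiSum := by
  intro N
  filter_upwards [eventually_ge_atTop N] with n hn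
  refine AdicSmall.dvd_sub hasSum_psiTerm fun s hs => ?_
  rw [Finset.mem_range, not_lt] at hs
  exact pow_dvd_pow _ (by nlinarith)

lemma adicLim_psi_mul_prod :
    AdicLim (fun n => psiSum * ∏ k ∈ Finset.range n, prodFactor k) euler := by
  intro N
  have h8 : Tendsto (fun n : ℕ => 8 * n) atTop atTop :=
    tendsto_atTop_mono (fun n => show n ≤ 8 * n by omega) tendsto_id
  filter_upwards [adicLim_psi N, adicLim_qPoch.comp h8 N, eventually_ge_atTop N] with n h1 h2 h3
  have h4 := (pow_dvd_pow PowerSeries.X h3).trans (psi_mul_prod_dvd n)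
  have e : psiSum * ∏ k ∈ Finset.range n, prodFactor k - euler
      = -((∑ s ∈ Finset.range (2 * n + 1), psiTerm s - psiSum) * ∏ k ∈ Finset.range n, prodFactor k)
        + ((∑ s ∈ Finset.range (2 * n + 1), psiTerm s) * (∏ k ∈ Finset.range n, prodFactor k)
          - qPoch (8 * n)) + (qPoch (8 * n) - euler) := by ring
  rw [e]
  exact dvd_add (dvd_add ((h1.mul_right _).neg_right) h4) h2

lemma multipliable_prodFactor : Multipliable prodFactor := by
  have hc (c : ℕ) (hc : 0 < c) : Multipliable fun k : ℕ => (1 - q ^ (8 * k + c) : PowerSeries ℚ) := by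
    simp only [sub_eq_add_neg]
    refine PowerSeries.WithPiTopology.multipliable_one_add_of_tendsto_order_atTop_nhds_top ℚ ?_
    refine ENat.tendsto_nhds_top_iff_natCast_lt.mpr fun n => eventually_atTop.mpr ⟨n, fun m hm => ?_⟩
    rw [PowerSeries.order_neg, q, PowerSeries.order_X_pow]
    norm_cast
    omega
  have := ((((((hc 1 (by omega)).mul (hc 2 (by omega))).mul (hc 3 (by omega))).mul
    ((hc 4 (by omega)).mul (hc 4 (by omega)))).mul (hc 5 (by omega))).mul (hc 6 (by omega))).mul
    (hc 7 (by omega))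
  refine this.congr fun k => ?_
  rw [prodFactor]
  ring

end product

/-! ### The infinite identity -/

section final
open Filter

lemma quadTerm_eq_zero {n₁ n₂ n₃ n₄ : ℕ} (h : ¬(n₂ ≤ n₁ ∧ n₃ ≤ n₂ ∧ n₄ ≤ n₁)) :
    quadTerm n₁ n₂ n₃ n₄ = 0 := by
  by_cases h2 : n₂ ≤ n₁
  · by_cases h3 : n₃ ≤ n₂
    · rw [quadTerm, qBinom.eq_def n₁ n₄, if_neg (fun h4 => h ⟨h2, h3, h4⟩), mul_zero, zero_mul]
    · rw [quadTerm, qBinom.eq_def n₂ n₃, if_neg h3, mul_zero]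
  · rw [quadTerm, qBinom.eq_def n₁ n₂, if_neg h2, mul_zero, zero_mul, zero_mul]

lemma X_pow_dvd_quadTerm (n₁ n₂ n₃ n₄ : ℕ) :
    (PowerSeries.X : PowerSeries ℚ) ^ n₁ ∣ quadTerm n₁ n₂ n₃ n₄ := by
  rw [quadTerm]
  refine Dvd.dvd.mul_right (Dvd.dvd.mul_right (Dvd.dvd.mul_right (Dvd.dvd.mul_right
    (pow_dvd_pow _ ?_) _) _) _) _
  have h : n₁ * n₂ ≤ n₁ ^ 2 + n₂ ^ 2 := by
    rcases le_total n₁ n₂ with h | h <;> nlinarith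
  omega

lemma X_pow_dvd_partA (m : ℕ) : (PowerSeries.X : PowerSeries ℚ) ^ m ∣ partA m :=
  Finset.dvd_sum fun _ _ => Finset.dvd_sum fun _ _ => Finset.dvd_sum fun _ _ =>
    X_pow_dvd_quadTerm ..

lemma X_pow_dvd_partB (m : ℕ) : (PowerSeries.X : PowerSeries ℚ) ^ (m + 1) ∣ partB m :=
  Finset.dvd_sum fun _ _ => Finset.dvd_sum fun _ _ => Finset.dvd_sum fun _ _ =>
    (pow_dvd_pow _ (by omega)).mul_right _

lemma X_pow_dvd_genCoeff (m : ℕ) : (PowerSeries.X : PowerSeries ℚ) ^ m ∣ genCoeff m := by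
  rw [genCoeff]
  refine dvd_add (X_pow_dvd_partA m) ?_
  rcases m with _ | m
  · simp
  · rw [if_neg (by omega), Nat.add_sub_cancel]
    exact X_pow_dvd_partB m

lemma genCoeff_small : AdicSmall genCoeff := by
  intro N
  refine (Set.finite_Iio N).subset fun k hk => ?_
  by_contra h
  simp only [Set.mem_Iio, not_lt] at h
  exact hk ((pow_dvd_pow _ h).trans (X_pow_dvd_genCoeff k))

/-- Sums over `n₃ ≤ n₂ ≤ m`, `n₄ ≤ m` may be extended to a cube when the terms outside vanish. -/
lemma sum_triangle_eq_box {m N : ℕ} (hN : m < N) (f : ℕ → ℕ → ℕ → PowerSeries ℚ)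
    (hf : ∀ n₂ n₃ n₄, ¬(n₂ ≤ m ∧ n₃ ≤ n₂ ∧ n₄ ≤ m) → f n₂ n₃ n₄ = 0) :
    ∑ n₂ ∈ Finset.range (m + 1), ∑ n₃ ∈ Finset.range (n₂ + 1), ∑ n₄ ∈ Finset.range (m + 1),
      f n₂ n₃ n₄
    = ∑ n₂ ∈ Finset.range N, ∑ n₃ ∈ Finset.range N, ∑ n₄ ∈ Finset.range N, f n₂ n₃ n₄ := by
  have h4 (n₂ n₃ : ℕ) : ∑ n₄ ∈ Finset.range (m + 1), f n₂ n₃ n₄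
      = ∑ n₄ ∈ Finset.range N, f n₂ n₃ n₄ :=
    Finset.sum_subset (Finset.range_mono (by omega)) fun n₄ _ h => hf _ _ _ fun hc =>
      h (Finset.mem_range.mpr (by omega))
  have h2 : ∑ n₂ ∈ Finset.range (m + 1), ∑ n₃ ∈ Finset.range N, ∑ n₄ ∈ Finset.range N, f n₂ n₃ n₄
      = ∑ n₂ ∈ Finset.range N, ∑ n₃ ∈ Finset.range N, ∑ n₄ ∈ Finset.range N, f n₂ n₃ n₄ :=
    Finset.sum_subset (Finset.range_mono (by omega)) fun n₂ _ h =>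
      Finset.sum_eq_zero fun n₃ _ => Finset.sum_eq_zero fun n₄ _ => hf _ _ _ fun hc =>
        h (Finset.mem_range.mpr (by omega))
  rw [← h2]
  refine Finset.sum_congr rfl fun n₂ hn₂ => ?_
  rw [Finset.mem_range] at hn₂
  simp only [h4]
  exact Finset.sum_subset (Finset.range_mono (by omega)) fun n₃ _ h =>
    Finset.sum_eq_zero fun n₄ _ => hf _ _ _ fun hc => h (Finset.mem_range.mpr (by omega))

/-- The summand of the theorem. -/
noncomputable def fullTerm (n : ℕ × ℕ × ℕ × ℕ) : PowerSeries ℚ :=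
  quadTerm n.1 n.2.1 n.2.2.1 n.2.2.2 * (1 + q ^ (n.1 + n.2.1 + n.2.2.2 + 1))

/-- The cube `[0, N)⁴` of indices. -/
def box (N : ℕ) : Finset (ℕ × ℕ × ℕ × ℕ) :=
  Finset.range N ×ˢ Finset.range N ×ˢ Finset.range N ×ˢ Finset.range N

lemma X_pow_dvd_fullTerm {N : ℕ} {n : ℕ × ℕ × ℕ × ℕ} (hn : n ∉ box N) :
    (PowerSeries.X : PowerSeries ℚ) ^ N ∣ fullTerm n := by
  rw [fullTerm]
  refine Dvd.dvd.mul_right ?_ _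
  by_cases h : n.2.1 ≤ n.1 ∧ n.2.2.1 ≤ n.2.1 ∧ n.2.2.2 ≤ n.1
  · refine (pow_dvd_pow _ ?_).trans (X_pow_dvd_quadTerm ..)
    by_contra hc
    refine hn ?_
    simp only [box, Finset.mem_product, Finset.mem_range]
    omega
  · rw [quadTerm_eq_zero h]
    exact dvd_zero _

lemma fullTerm_small : AdicSmall fullTerm := by
  intro N
  refine (Finset.finite_toSet (box N)).subset fun n hn => ?_
  by_contra h
  exact hn (X_pow_dvd_fullTerm h)

lemma sum_box_fullTerm (N : ℕ) :
    ∑ n ∈ box N, fullTerm n = ∑ m ∈ Finset.range N, (partA m + partB m) := by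
  rw [box, Finset.sum_product]
  refine Finset.sum_congr rfl fun m hm => ?_
  rw [Finset.mem_range] at hm
  rw [partA, partB, sum_triangle_eq_box hm _ fun _ _ _ h => quadTerm_eq_zero h,
    sum_triangle_eq_box hm _ fun _ _ _ h => by rw [quadTerm_eq_zero h, mul_zero]]
  simp only [Finset.sum_product, ← Finset.sum_add_distrib, fullTerm]
  refine Finset.sum_congr rfl fun n₂ _ => Finset.sum_congr rfl fun n₃ _ =>
    Finset.sum_congr rfl fun n₄ _ => by ring

/-- Up to the term `partB N`, shifting the summation index in `partB` turns the multisum into the sum of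
the coefficients of `G_{(4,0,1)}`. -/
lemma sum_partA_add_partB (N : ℕ) : ∑ m ∈ Finset.range (N + 1), (partA m + partB m)
    = ∑ m ∈ Finset.range (N + 1), genCoeff m + partB N := by
  induction N with
  | zero => simp [genCoeff]
  | succ N ih =>
    rw [Finset.sum_range_succ, ih, Finset.sum_range_succ _ (N + 1), genCoeff.eq_def (N + 1),
      if_neg (by omega), Nat.add_sub_cancel]
    ring

lemma tsum_fullTerm : ∑' n, fullTerm n = ∑' m, genCoeff m := by
  refine eq_of_forall_X_pow_dvd fun N => ?_
  have h1 : (PowerSeries.X : PowerSeries ℚ) ^ N ∣ ∑ n ∈ box (N + 1), fullTerm n - ∑' n, fullTerm n :=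
    AdicSmall.dvd_sub fullTerm_small.summable.hasSum fun n hn =>
      (pow_dvd_pow _ N.le_succ).trans (X_pow_dvd_fullTerm hn)
  have h2 : (PowerSeries.X : PowerSeries ℚ) ^ N ∣
      ∑ m ∈ Finset.range (N + 1), genCoeff m - ∑' m, genCoeff m :=
    AdicSmall.dvd_sub genCoeff_small.summable.hasSum fun m hm =>
      (pow_dvd_pow _ (by simpa using Nat.le_of_succ_le (by simpa using hm))).trans
        (X_pow_dvd_genCoeff m)
  have h3 := (pow_dvd_pow (PowerSeries.X : PowerSeries ℚ) N.le_succ).trans (X_pow_dvd_partB N)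
  rw [sum_box_fullTerm, sum_partA_add_partB] at h1
  have e : ∑' n, fullTerm n - ∑' m, genCoeff m
      = (∑ m ∈ Finset.range (N + 1), genCoeff m - ∑' m, genCoeff m)
        - (∑ m ∈ Finset.range (N + 1), genCoeff m + partB N - ∑' n, fullTerm n) + partB N := by
    ring
  rw [e]
  exact dvd_add (dvd_sub h2 h1) h3

/-- The multisum is `ψ(q⁴) / (q;q)_∞`: letting `n → ∞` in `finsum_weightA_eq`, the left side tends to the
multisum divided by `(q;q)_∞`, the right side to `(q;q)_∞ ψ(q⁴)` divided by `(q;q)_∞ ^ 3`. -/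
lemma tsum_genCoeff : ∑' m, genCoeff m = psiSum * euler⁻¹ := by
  obtain ⟨T₀, T₁, hs0, hs1, h0, h1, hT⟩ := thetaTerm_hasSum
  have hL := genCoeff_small.adicLim_finsum genCoeff_small.summable.hasSum finite_support_weightA
    adicLim_weightA
  have hR := (hs0.adicLim_finsum h0 (finite_support_weightD 0) (adicLim_weightD 0)).sub
    (hs1.adicLim_finsum h1 (finite_support_weightD 1) (adicLim_weightD 1))
  simp only [← finsum_weightA_eq] at hR
  have h := hL.unique hR
  have he := euler_mul_inv
  calc ∑' m, genCoeff m = (∑' m, genCoeff m) * euler⁻¹ * euler := by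
        rw [mul_assoc, mul_comm euler⁻¹, he, mul_one]
    _ = (T₀ - T₁) * euler⁻¹ * euler⁻¹ * (euler * euler⁻¹) := by rw [h]; ring
    _ = psiSum * euler⁻¹ * (euler * euler⁻¹) * (euler * euler⁻¹) := by rw [hT]; ring
    _ = psiSum * euler⁻¹ := by rw [he, mul_one, mul_one]

/-- Gauss's product formula, in the form `ψ(q⁴) · ∏' prodFactor = (q;q)_∞`. -/
lemma psiSum_mul_tprod : psiSum * ∏' k, prodFactor k = euler :=
  tendsto_nhds_unique (multipliable_prodFactor.hasProd.tendsto_prod_nat.const_mul psiSum)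
    adicLim_psi_mul_prod.tendsto

end final

/-- Fifth new modulus-8 identity (profile (4,0,1)). -/
theorem a2_mod8_profile401 :
    ∑' n : ℕ × ℕ × ℕ × ℕ,
      (fun n₁ n₂ n₃ n₄ : ℕ =>
        q ^ (n₁ ^ 2 + n₂ ^ 2 + n₃ ^ 2 + n₄ ^ 2 + (n₁ + n₃) + n₂ * n₄ - n₁ * n₂)
          * (1 + q ^ (n₁ + n₂ + n₄ + 1)) * (qPoch n₁)⁻¹ * qBinom n₁ n₂ * qBinom n₁ n₄ * qBinom n₂ n₃)
      n.1 n.2.1 n.2.2.1 n.2.2.2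
      = (∏' k : ℕ, ((1 - q ^ (8*k+1)) * (1 - q ^ (8*k+2)) * (1 - q ^ (8*k+3)) * (1 - q ^ (8*k+4))^2 * (1 - q ^ (8*k+5)) * (1 - q ^ (8*k+6)) * (1 - q ^ (8*k+7))))⁻¹ := by
  have hterm (n : ℕ × ℕ × ℕ × ℕ) :
      (fun n₁ n₂ n₃ n₄ : ℕ =>
        q ^ (n₁ ^ 2 + n₂ ^ 2 + n₃ ^ 2 + n₄ ^ 2 + (n₁ + n₃) + n₂ * n₄ - n₁ * n₂)
          * (1 + q ^ (n₁ + n₂ + n₄ + 1)) * (qPoch n₁)⁻¹ * qBinom n₁ n₂ * qBinom n₁ n₄ * qBinom n₂ n₃)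
      n.1 n.2.1 n.2.2.1 n.2.2.2 = fullTerm n := by
    simp only [fullTerm, quadTerm]
    ring
  simp only [hterm]
  change _ = (∏' k, prodFactor k)⁻¹
  have h : (∑' n, fullTerm n) * ∏' k, prodFactor k = 1 := by
    rw [tsum_fullTerm, tsum_genCoeff, mul_right_comm, psiSum_mul_tprod, euler_mul_inv]
  have hne : PowerSeries.constantCoeff (∏' k, prodFactor k) ≠ 0 := fun h0 => by
    have := congrArg PowerSeries.constantCoeff h
    rw [map_mul, h0, mul_zero, map_one] at this
    exact zero_ne_one this
  exact (PowerSeries.eq_inv_iff_mul_eq_one hne).mpr h
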